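/- arXiv:1708.03495 — 17 statements merged into one kernel-verified Lean document; each statement's English description precedes it below -/
import Mathlib

section
/- Let F be a field, ε ∈ {1,−1}, and B₁,…,B_m ∈ M(n,F). If there exist A, D ∈ GL(n,F) such that (A*B_i*D)ᵀ = ε•(A*B_i*D) for all i, then the dimension of ⋂_i ker(B_i) (the common kernel, where B_i acts on Fⁿ by v ↦ B_i v) plus the dimension of the span of ⋃_i range(B_i) (the joint column space) equals n. -/
open Matrix

/-!
Under the dot product, the annihilator of the joint column space of a family of matrices is the
common kernel of their transposes, so the dimensions of these two spaces always add up to the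
number of rows. Replacing every `B i` by `A * B i * D` with fixed invertible `A` and `D` moves the
common kernel by `D⁻¹` and the joint column space by `A`, so no dimension changes; and when `Mᵀ` is
a multiple of `M`, also `M = Mᵀᵀ` is a multiple of `Mᵀ`, so `M` and `Mᵀ` have the same kernel.
-/

theorem iInf_ker_dualMap_eq_dualAnnihilator_iSup_range {R V W : Type*} {ι : Sort*}
    [CommSemiring R] [AddCommMonoid V] [AddCommMonoid W] [Module R V] [Module R W]
    (f : ι → V →ₗ[R] W) :
    ⨅ i, LinearMap.ker (f i).dualMap = (⨆ i, LinearMap.range (f i)).dualAnnihilator := by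
  simp only [LinearMap.ker_dualMap_eq_dualAnnihilator_range, Submodule.dualAnnihilator_iSup_eq]

section Transpose

variable {R F m n : Type*} {ι : Sort*} [Fintype m] [Fintype n]

theorem ker_mulVecLin_transpose_eq_of_transpose_eq_smul [CommSemiring R] {M : Matrix n n R} {ε : R}
    (h : Mᵀ = ε • M) : LinearMap.ker Mᵀ.mulVecLin = LinearMap.ker M.mulVecLin := by
  have h' : M = ε • Mᵀ := by rw [← transpose_smul, ← h, transpose_transpose]
  ext v
  simp only [LinearMap.mem_ker, mulVecLin_apply]
  constructor <;> intro hv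
  · rw [h', smul_mulVec, hv, smul_zero]
  · rw [h, smul_mulVec, hv, smul_zero]

theorem dotProductEquiv_comp_mulVecLin_transpose [DecidableEq m] [DecidableEq n] [CommSemiring R]
    (M : Matrix m n R) :
    (dotProductEquiv R n).toLinearMap ∘ₗ Mᵀ.mulVecLin =
      M.mulVecLin.dualMap ∘ₗ (dotProductEquiv R m).toLinearMap := by
  refine LinearMap.ext fun v ↦ LinearMap.ext fun w ↦ ?_
  simp [dotProduct_mulVec]

theorem iInf_ker_mulVecLin_transpose_eq_comap_dualAnnihilator [DecidableEq m] [CommSemiring R]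
    (B : ι → Matrix m n R) :
    ⨅ i, LinearMap.ker (B i)ᵀ.mulVecLin =
      (⨆ i, LinearMap.range (B i).mulVecLin).dualAnnihilator.comap
        (dotProductEquiv R m).toLinearMap := by
  classical
  simp only [← iInf_ker_dualMap_eq_dualAnnihilator_iSup_range, Submodule.comap_iInf,
    ← LinearMap.ker_comp, ← dotProductEquiv_comp_mulVecLin_transpose, LinearEquiv.ker_comp]

theorem finrank_iInf_ker_mulVecLin_transpose_add_finrank_iSup_range [Field F]
    (B : ι → Matrix m n F) :
    Module.finrank F ↥(⨅ i, LinearMap.ker (B i)ᵀ.mulVecLin) +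
      Module.finrank F ↥(⨆ i, LinearMap.range (B i).mulVecLin) = Fintype.card m := by
  classical
  rw [iInf_ker_mulVecLin_transpose_eq_comap_dualAnnihilator,
    ((dotProductEquiv F m).ofSubmodule' _).finrank_eq, add_comm,
    Subspace.finrank_add_finrank_dualAnnihilator_eq, Module.finrank_fintype_fun_eq_card]

end Transpose

section Equivalence

variable {R k l m n : Type*} {ι : Sort*} [Fintype m] [Fintype n]

theorem iInf_ker_mulVecLin_mul_mul [CommSemiring R] [Fintype l] {A : Matrix k m R}
    (hA : Function.Injective A.mulVecLin) (B : ι → Matrix m n R) (D : Matrix n l R) :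
    ⨅ i, LinearMap.ker (A * B i * D).mulVecLin =
      (⨅ i, LinearMap.ker (B i).mulVecLin).comap D.mulVecLin := by
  have hA_zero (w : m → R) : A *ᵥ w = 0 ↔ w = 0 := hA.eq_iff' (mulVec_zero A)
  ext v
  simp only [Submodule.mem_comap, Submodule.mem_iInf, LinearMap.mem_ker, mulVecLin_apply,
    ← mulVec_mulVec, hA_zero]

theorem iSup_range_mulVecLin_mul_mul [CommSemiring R] [Fintype l] (A : Matrix k m R)
    (B : ι → Matrix m n R) {D : Matrix n l R} (hD : Function.Surjective D.mulVecLin) :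
    ⨆ i, LinearMap.range (A * B i * D).mulVecLin =
      (⨆ i, LinearMap.range (B i).mulVecLin).map A.mulVecLin := by
  simp only [Submodule.map_iSup, mulVecLin_mul,
    LinearMap.range_comp_of_range_eq_top _ (LinearMap.range_eq_top.2 hD), LinearMap.range_comp]

variable [DecidableEq m] [DecidableEq n] [CommRing R] {A : Matrix m m R} {D : Matrix n n R}

theorem finrank_iInf_ker_mulVecLin_mul_mul (hA : IsUnit A) (B : ι → Matrix m n R)
    (hD : IsUnit D) :
    Module.finrank R ↥(⨅ i, LinearMap.ker (A * B i * D).mulVecLin) =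
      Module.finrank R ↥(⨅ i, LinearMap.ker (B i).mulVecLin) := by
  rw [iInf_ker_mulVecLin_mul_mul (mulVec_injective_of_isUnit hA)]
  exact ((D.toLinearEquiv' hD.invertible).ofSubmodule' _).finrank_eq

theorem finrank_iSup_range_mulVecLin_mul_mul (hA : IsUnit A) (B : ι → Matrix m n R)
    (hD : IsUnit D) :
    Module.finrank R ↥(⨆ i, LinearMap.range (A * B i * D).mulVecLin) =
      Module.finrank R ↥(⨆ i, LinearMap.range (B i).mulVecLin) := by
  rw [iSup_range_mulVecLin_mul_mul A B (mulVec_surjective_iff_isUnit.2 hD)]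
  exact (A.toLinearEquiv' hA.invertible).finrank_map_eq _

end Equivalence

theorem stmt_2_general {F n : Type*} {ι : Sort*} [Field F] [Fintype n] [DecidableEq n]
    (ε : ι → F) (B : ι → Matrix n n F)
    (h : ∃ A D : Matrix n n F, IsUnit A ∧ IsUnit D ∧
        ∀ i, (A * B i * D)ᵀ = ε i • (A * B i * D)) :
    Module.finrank F ↥(⨅ i, LinearMap.ker (B i).mulVecLin) +
      Module.finrank F ↥(⨆ i, LinearMap.range (B i).mulVecLin) = Fintype.card n := by
  obtain ⟨A, D, hA, hD, hsymm⟩ := h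
  have hker : ⨅ i, LinearMap.ker (A * B i * D)ᵀ.mulVecLin =
      ⨅ i, LinearMap.ker (A * B i * D).mulVecLin :=
    iInf_congr fun i ↦ ker_mulVecLin_transpose_eq_of_transpose_eq_smul (hsymm i)
  rw [← finrank_iInf_ker_mulVecLin_mul_mul hA B hD, ← finrank_iSup_range_mulVecLin_mul_mul hA B hD,
    ← hker, finrank_iInf_ker_mulVecLin_transpose_add_finrank_iSup_range]

/-- If a tuple of matrices is ε-symmetrizable, then the dimension of the common
kernel plus the dimension of the joint column space equals n. -/
theorem stmt_2 {F : Type*} [Field F] (ε : F) (hε : ε = 1 ∨ ε = -1) (n m : ℕ)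
    (B : Fin m → Matrix (Fin n) (Fin n) F)
    (h : ∃ A D : Matrix (Fin n) (Fin n) F, IsUnit A ∧ IsUnit D ∧
        ∀ i, (A * B i * D)ᵀ = ε • (A * B i * D)) :
    Module.finrank F ↥(⨅ i, LinearMap.ker (B i).mulVecLin) +
      Module.finrank F ↥(⨆ i, LinearMap.range (B i).mulVecLin) = n := by
  simpa only [Fintype.card_fin] using stmt_2_general (fun _ ↦ ε) B h
end

section
/- Let F be a field with char F ≠ 2, let n ≥ 1, and let C₁,…,C_n ∈ M(n,F) be skew-symmetric matrices (C_iᵀ = −C_i). Then for every vector v ∈ Fⁿ, the n×n matrix M whose i-th column is C_i·v (i.e., M_{j,i} = (C_i v)_j) has determinant 0. -/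
open Matrix

/-!
Skew-symmetry makes `v` isotropic for every `C i`, so `v` is a left null vector of the matrix `M`
with columns `C i *ᵥ v`. Multiplying by the adjugate gives `M.det • v = 0`. As `M` depends linearly
on `v`, also `M.det • M = 0`; taking determinants shows that `M.det` is nilpotent.
-/

section

variable {R ι : Type*} [CommRing R] [Fintype ι]

theorem dotProduct_mulVec_self_eq_zero_of_transpose_eq_neg (h2 : IsLeftRegular (2 : R))
    {A : Matrix ι ι R} (hA : Aᵀ = -A) (v : ι → R) : v ⬝ᵥ A *ᵥ v = 0 := by
  have eq_neg_self : v ⬝ᵥ A *ᵥ v = -(v ⬝ᵥ A *ᵥ v) :=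
    calc v ⬝ᵥ A *ᵥ v = Aᵀ *ᵥ v ⬝ᵥ v := by rw [dotProduct_mulVec, mulVec_transpose]
      _ = -(v ⬝ᵥ A *ᵥ v) := by rw [hA, neg_mulVec, neg_dotProduct, dotProduct_comm]
  exact h2.mul_left_eq_zero_iff.mp (by linear_combination eq_neg_self)

theorem det_smul_eq_zero_of_vecMul_eq_zero [DecidableEq ι] {M : Matrix ι ι R} {v : ι → R}
    (h : v ᵥ* M = 0) : M.det • v = 0 :=
  calc M.det • v = v ᵥ* (M * M.adjugate) := by rw [mul_adjugate, vecMul_smul, vecMul_one]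
    _ = 0 := by rw [← vecMul_vecMul, h, zero_vecMul]

theorem stmt_3_general [IsReduced R] [DecidableEq ι] [Nonempty ι] {C : ι → Matrix ι ι R}
    {v : ι → R} (hv : ∀ i, v ⬝ᵥ C i *ᵥ v = 0) :
    (Matrix.of fun j i => (C i *ᵥ v) j).det = 0 := by
  set M : Matrix ι ι R := Matrix.of fun j i => (C i *ᵥ v) j
  have det_smul_v : M.det • v = 0 := det_smul_eq_zero_of_vecMul_eq_zero (funext hv)
  have det_smul_M : M.det • M = 0 := by
    ext j i
    calc M.det • (C i *ᵥ v) j = (C i *ᵥ (M.det • v)) j := by rw [mulVec_smul, Pi.smul_apply]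
      _ = 0 := by rw [det_smul_v, mulVec_zero, Pi.zero_apply]
  have det_pow : M.det ^ (Fintype.card ι + 1) = 0 := by
    rw [pow_succ, ← det_smul, det_smul_M, det_zero]
  exact eq_zero_of_pow_eq_zero det_pow

end

/-- Every member of a skew-symmetric induced matrix space is singular: if
C₁, …, C_n are skew-symmetric n×n matrices, then for each vector v the matrix
with columns C₁v, …, C_nv has determinant 0. -/
theorem stmt_3 {F : Type*} [Field F] (h2 : (2 : F) ≠ 0) (n : ℕ) (hn : 1 ≤ n)
    (C : Fin n → Matrix (Fin n) (Fin n) F) (hC : ∀ i, (C i)ᵀ = -(C i))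
    (v : Fin n → F) :
    (Matrix.of fun j i => (C i).mulVec v j).det = 0 := by
  have : Nonempty (Fin n) := ⟨⟨0, hn⟩⟩
  exact stmt_3_general fun i =>
    dotProduct_mulVec_self_eq_zero_of_transpose_eq_neg (IsRegular.of_ne_zero h2).left (hC i) v
end

section
/- Let F be a field and B₁,…,B_m, C₁,…,C_m ∈ M(n,F). Define 2n×2n block matrices B'₀ = [[I_n, 0],[0, 0]], B'_i = [[0, B_i],[0, 0]] for i ∈ [m], and similarly C'₀ = [[I_n, 0],[0, 0]], C'_i = [[0, C_i],[0, 0]]. Then there exist A, D ∈ GL(n,F) with A*B_i = C_i*D for all i ∈ [m], if and only if there exists E ∈ GL(2n,F) with E*B'₀ = C'₀*E and E*B'_i = C'_i*E for all i ∈ [m]. -/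
open Matrix

/-! Commuting with `fromBlocks 1 0 0 0` forces `E` to be block diagonal. Its diagonal blocks `A` and
`D` act on opposite sides of the off-diagonal blocks `B i` and `C i` and are independent of each
other, so conjugation by `E` becomes equivalence through `A` and `D`. -/

section BlockDiagonal

variable {ι κ R : Type*} [Fintype ι] [Fintype κ]

theorem isUnit_fromBlocks_diagonal_iff [DecidableEq ι] [DecidableEq κ] [Semiring R]
    {A : Matrix ι ι R} {D : Matrix κ κ R} :
    IsUnit (fromBlocks A 0 0 D) ↔ IsUnit A ∧ IsUnit D := by
  simp only [isUnit_iff_exists]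
  constructor
  · rintro ⟨M, hright, hleft⟩
    rw [← fromBlocks_toBlocks M] at hright hleft
    simp only [fromBlocks_multiply, ← fromBlocks_one, fromBlocks_inj, Matrix.zero_mul,
      Matrix.mul_zero, add_zero, zero_add] at hright hleft
    exact ⟨⟨M.toBlocks₁₁, hright.1, hleft.1⟩, ⟨M.toBlocks₂₂, hright.2.2.2, hleft.2.2.2⟩⟩
  · rintro ⟨⟨A', hAA', hA'A⟩, ⟨D', hDD', hD'D⟩⟩
    exact ⟨fromBlocks A' 0 0 D', by simp [fromBlocks_multiply, hAA', hDD'],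
      by simp [fromBlocks_multiply, hA'A, hD'D]⟩

theorem commute_fromBlocks_one_zero_iff [DecidableEq ι] [NonAssocSemiring R]
    {E : Matrix (ι ⊕ κ) (ι ⊕ κ) R} :
    Commute E (fromBlocks 1 0 0 0) ↔ ∃ A D, E = fromBlocks A 0 0 D := by
  constructor
  · intro hE
    rw [← fromBlocks_toBlocks E, commute_iff_eq] at hE
    simp only [fromBlocks_multiply, fromBlocks_inj, Matrix.one_mul, Matrix.mul_one,
      Matrix.mul_zero, Matrix.zero_mul, add_zero] at hE
    obtain ⟨-, h₁₂, h₂₁, -⟩ := hE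
    refine ⟨E.toBlocks₁₁, E.toBlocks₂₂, ?_⟩
    conv_lhs => rw [← fromBlocks_toBlocks E, ← h₁₂, h₂₁]
  · rintro ⟨A, D, rfl⟩
    simp [commute_iff_eq, fromBlocks_multiply]

theorem fromBlocks_diagonal_intertwines_iff [NonUnitalNonAssocSemiring R]
    {A : Matrix ι ι R} {D : Matrix κ κ R} {B C : Matrix ι κ R} :
    fromBlocks A 0 0 D * fromBlocks 0 B 0 0 = fromBlocks 0 C 0 0 * fromBlocks A 0 0 D ↔
      A * B = C * D := by
  simp [fromBlocks_multiply, fromBlocks_inj]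

theorem stmt_4_general [DecidableEq ι] [DecidableEq κ] [Semiring R] {σ : Sort*}
    (B C : σ → Matrix ι κ R) :
    (∃ (A : Matrix ι ι R) (D : Matrix κ κ R), IsUnit A ∧ IsUnit D ∧ ∀ i, A * B i = C i * D) ↔
      ∃ E : Matrix (ι ⊕ κ) (ι ⊕ κ) R, IsUnit E ∧
        E * fromBlocks 1 0 0 0 = fromBlocks 1 0 0 0 * E ∧
        ∀ i, E * fromBlocks 0 (B i) 0 0 = fromBlocks 0 (C i) 0 0 * E := by
  constructor
  · rintro ⟨A, D, hA, hD, h⟩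
    exact ⟨fromBlocks A 0 0 D, isUnit_fromBlocks_diagonal_iff.2 ⟨hA, hD⟩,
      commute_fromBlocks_one_zero_iff.2 ⟨A, D, rfl⟩,
      fun i => fromBlocks_diagonal_intertwines_iff.2 (h i)⟩
  · rintro ⟨E, hE, hcomm, h⟩
    obtain ⟨A, D, rfl⟩ := commute_fromBlocks_one_zero_iff.1 hcomm
    obtain ⟨hA, hD⟩ := isUnit_fromBlocks_diagonal_iff.1 hE
    exact ⟨A, D, hA, hD, fun i => fromBlocks_diagonal_intertwines_iff.1 (h i)⟩

end BlockDiagonal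

/-- Reduction of the equivalence problem for matrix tuples to the conjugacy
(module isomorphism) problem, via 2×2 block matrices. -/
theorem stmt_4 {F : Type*} [Field F] (n m : ℕ)
    (B C : Fin m → Matrix (Fin n) (Fin n) F) :
    (∃ A D : Matrix (Fin n) (Fin n) F, IsUnit A ∧ IsUnit D ∧
        ∀ i, A * B i = C i * D) ↔
      (∃ E : Matrix (Fin n ⊕ Fin n) (Fin n ⊕ Fin n) F, IsUnit E ∧
        E * Matrix.fromBlocks 1 0 0 0 = Matrix.fromBlocks 1 0 0 0 * E ∧
        ∀ i, E * Matrix.fromBlocks 0 (B i) 0 0 =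
          Matrix.fromBlocks 0 (C i) 0 0 * E) :=
  stmt_4_general B C
end

section
/- Let F be a field, ε ∈ {1,−1}, and let B₁,…,B_m, C₁,…,C_m ∈ M(n,F) satisfy B_iᵀ = ε•B_i and C_iᵀ = ε•C_i for all i. Suppose A, D ∈ GL(n,F) satisfy Aᵀ*B_i = C_i*D for all i. Then the matrix E = A⁻¹*D⁻¹ satisfies Eᵀ*C_i = C_i*E for all i (i.e., E is a *-symmetric element of the adjoint algebra of the tuple C). -/
open Matrix

/-!
An adjoint pair `(A, D)` from `C` to `B` yields the adjoint pair `(A⁻¹, D⁻¹)` from `B` to `C`. As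
`B` and `C` are `ε`-symmetric, transposing turns the latter into the adjoint pair `(D⁻¹, A⁻¹)` from
`C` to `B`. The composite of the last two is `(A⁻¹ * D⁻¹, A⁻¹ * D⁻¹)`, an adjoint pair from `C` to
itself with equal components.
-/

theorem eq_smul_transpose_of_transpose_eq_smul {n R S : Type*} [SMul S R] {ε : S}
    {J : Matrix n n R} (hJ : Jᵀ = ε • J) : J = ε • Jᵀ := by
  simpa only [transpose_transpose, transpose_smul] using congrArg transpose hJ

section AdjointPair

variable {n n' n'' R : Type*} [Fintype n] [Fintype n'] [CommRing R]
variable {J : Matrix n n R} {J' : Matrix n' n' R}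

theorem isAdjointPair_mul [Fintype n''] {J'' : Matrix n'' n'' R}
    {A : Matrix n' n R} {A' : Matrix n n' R} {B : Matrix n'' n' R} {B' : Matrix n' n'' R}
    (hA : J.IsAdjointPair J' A A') (hB : J'.IsAdjointPair J'' B B') :
    J.IsAdjointPair J'' (B * A) (A' * B') :=
  calc (B * A)ᵀ * J'' = Aᵀ * (Bᵀ * J'') := by rw [transpose_mul, Matrix.mul_assoc]
    _ = Aᵀ * J' * B' := by rw [hB, Matrix.mul_assoc]
    _ = J * (A' * B') := by rw [hA, Matrix.mul_assoc]

theorem isAdjointPair_swap_of_transpose_eq_smul {ε : R} {A : Matrix n' n R} {A' : Matrix n n' R}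
    (hJ : Jᵀ = ε • J) (hJ' : J'ᵀ = ε • J') (h : J.IsAdjointPair J' A A') :
    J'.IsAdjointPair J A' A :=
  calc A'ᵀ * J = A'ᵀ * (ε • Jᵀ) := by rw [← eq_smul_transpose_of_transpose_eq_smul hJ]
    _ = ε • (J * A')ᵀ := by rw [Matrix.mul_smul, transpose_mul]
    _ = ε • (Aᵀ * J')ᵀ := by rw [h]
    _ = (ε • J'ᵀ) * A := by rw [transpose_mul, transpose_transpose, Matrix.smul_mul]
    _ = J' * A := by rw [← eq_smul_transpose_of_transpose_eq_smul hJ']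

theorem isAdjointPair_inv [DecidableEq n] {J₁ J₂ A A' : Matrix n n R}
    (h : J₁.IsAdjointPair J₂ A A') (hA : IsUnit A) (hA' : IsUnit A') :
    J₂.IsAdjointPair J₁ A⁻¹ A'⁻¹ := by
  have hdetAT : IsUnit Aᵀ.det := A.isUnit_det_transpose ((isUnit_iff_isUnit_det A).mp hA)
  have hdetA' : IsUnit A'.det := (isUnit_iff_isUnit_det A').mp hA'
  calc A⁻¹ᵀ * J₁ = Aᵀ⁻¹ * (J₁ * A' * A'⁻¹) := by
        rw [transpose_nonsing_inv, mul_nonsing_inv_cancel_right _ _ hdetA']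
    _ = Aᵀ⁻¹ * (Aᵀ * (J₂ * A'⁻¹)) := by rw [← h, Matrix.mul_assoc]
    _ = J₂ * A'⁻¹ := nonsing_inv_mul_cancel_left _ _ hdetAT

theorem stmt_5_general [DecidableEq n] {ε : R} {B C A D : Matrix n n R}
    (hB : Bᵀ = ε • B) (hC : Cᵀ = ε • C) (hA : IsUnit A) (hD : IsUnit D)
    (hAD : C.IsAdjointPair B A D) : C.IsSelfAdjoint (A⁻¹ * D⁻¹) := by
  have hinv : B.IsAdjointPair C A⁻¹ D⁻¹ := isAdjointPair_inv hAD hA hD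
  have hswap : C.IsAdjointPair B D⁻¹ A⁻¹ := isAdjointPair_swap_of_transpose_eq_smul hB hC hinv
  exact isAdjointPair_mul hswap hinv

end AdjointPair

/-- If A, D witness a twisted equivalence between ε-symmetric tuples B and C,
then E = A⁻¹D⁻¹ is a *-symmetric element of the adjoint algebra of C. -/
theorem stmt_5 {F : Type*} [Field F] (ε : F) (hε : ε = 1 ∨ ε = -1) (n m : ℕ)
    (B C : Fin m → Matrix (Fin n) (Fin n) F)
    (hB : ∀ i, (B i)ᵀ = ε • B i) (hC : ∀ i, (C i)ᵀ = ε • C i)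
    (A D : Matrix (Fin n) (Fin n) F) (hA : IsUnit A) (hD : IsUnit D)
    (hAD : ∀ i, Aᵀ * B i = C i * D) :
    ∀ i, (A⁻¹ * D⁻¹)ᵀ * C i = C i * (A⁻¹ * D⁻¹) :=
  fun i ↦ stmt_5_general (hB i) (hC i) hA hD (hAD i)
end

section
/- Let F be a field, ε ∈ {1,−1}, and let B₁,…,B_m, C₁,…,C_m ∈ M(n,F) satisfy B_iᵀ = ε•B_i and C_iᵀ = ε•C_i for all i. Suppose A, D ∈ GL(n,F) satisfy Aᵀ*B_i = C_i*D for all i. Then there exists G ∈ GL(n,F) with Gᵀ*B_i*G = C_i for all i, if and only if there exist matrices X, Y ∈ M(n,F) such that Yᵀ*C_i = C_i*X for all i and Y*X = A⁻¹*D⁻¹. -/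
open Matrix

/-!
An isometry from `C` to `B` is a simultaneous adjoint pair `(P, Q)` from `C` to `B` with
`P * Q = 1`. Composition with the invertible adjoint pair `(A, D)` is a bijection
`(Y, X) ↦ (A * Y, X * D)` from the adjoint algebra of `C` to the adjoint pairs from `C` to `B`.
Under it `P * Q = 1` becomes `Y * X = A⁻¹ * D⁻¹`.
-/

section

variable {R n : Type*} [CommRing R] [Fintype n] [DecidableEq n]

theorem isAdjointPair_mul_mul_iff {l p : Type*} [Fintype l] [Fintype p]
    {J : Matrix p p R} {K : Matrix n n R} {L : Matrix l l R} {A : Matrix l n R} {D : Matrix n l R}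
    {E : Matrix l n R} {Y : Matrix n p R} {X : Matrix p n R}
    (hAD : IsAdjointPair K L A D) (hDE : D * E = 1) :
    IsAdjointPair J L (A * Y) (X * D) ↔ IsAdjointPair J K Y X := by
  have hAYL : (A * Y)ᵀ * L = Yᵀ * K * D := by
    rw [transpose_mul, Matrix.mul_assoc, show Aᵀ * L = K * D from hAD, Matrix.mul_assoc]
  rw [IsAdjointPair, IsAdjointPair, hAYL, ← Matrix.mul_assoc]
  exact (mul_left_injective_of_inv D E hDE).eq_iff

theorem isAdjointPair_iff_transpose_mul_mul_eq {J K P Q : Matrix n n R} (hPQ : P * Q = 1) :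
    IsAdjointPair J K P Q ↔ Pᵀ * K * P = J := by
  have hQP : Q * P = 1 := mul_eq_one_comm.mp hPQ
  rw [IsAdjointPair, ← (mul_left_injective_of_inv P Q hPQ).eq_iff, Matrix.mul_assoc J, hQP,
    Matrix.mul_one]

theorem exists_isUnit_transpose_mul_mul_eq_iff_exists_isAdjointPair {ι : Type*}
    {J K : ι → Matrix n n R} :
    (∃ G, IsUnit G ∧ ∀ i, Gᵀ * K i * G = J i) ↔
      ∃ Q P, (∀ i, IsAdjointPair (J i) (K i) P Q) ∧ P * Q = 1 := by
  constructor
  · rintro ⟨G, hG, hGK⟩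
    have hG_inv : G * G⁻¹ = 1 := G.mul_nonsing_inv ((isUnit_iff_isUnit_det G).mp hG)
    exact ⟨G⁻¹, G, fun i => (isAdjointPair_iff_transpose_mul_mul_eq hG_inv).mpr (hGK i), hG_inv⟩
  · rintro ⟨Q, P, hadj, hPQ⟩
    exact ⟨P, .of_mul_eq_one Q hPQ,
      fun i => (isAdjointPair_iff_transpose_mul_mul_eq hPQ).mp (hadj i)⟩

theorem mul_mul_mul_eq_one_iff_mul_eq_inv_mul_inv {p : Type*} [Fintype p]
    {A D : Matrix n n R} {Y : Matrix n p R} {X : Matrix p n R} (hA : IsUnit A) (hD : IsUnit D) :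
    A * Y * (X * D) = 1 ↔ Y * X = A⁻¹ * D⁻¹ := by
  obtain ⟨a, rfl⟩ := hA
  obtain ⟨d, rfl⟩ := hD
  rw [← coe_units_inv, ← coe_units_inv, a.eq_inv_mul_iff_mul_eq, ← d.mul_eq_one_iff_eq_inv]
  simp only [Matrix.mul_assoc]

theorem stmt_6_general {ι : Type*} (B C : ι → Matrix n n R) (A D : Matrix n n R)
    (hA : IsUnit A) (hD : IsUnit D) (hAD : ∀ i, Aᵀ * B i = C i * D) :
    (∃ G : Matrix n n R, IsUnit G ∧ ∀ i, Gᵀ * B i * G = C i) ↔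
      ∃ X Y : Matrix n n R, (∀ i, Yᵀ * C i = C i * X) ∧ Y * X = A⁻¹ * D⁻¹ := by
  have hD_inv : D * D⁻¹ = 1 := D.mul_nonsing_inv ((isUnit_iff_isUnit_det D).mp hD)
  have hA_surj : Function.Surjective (A * ·) :=
    (IsUnit.isUnit_iff_mulLeft_bijective.mp hA).surjective
  have hD_surj : Function.Surjective (· * D) :=
    (IsUnit.isUnit_iff_mulRight_bijective.mp hD).surjective
  calc
    (∃ G, IsUnit G ∧ ∀ i, Gᵀ * B i * G = C i)
      ↔ ∃ Q P, (∀ i, IsAdjointPair (C i) (B i) P Q) ∧ P * Q = 1 :=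
        exists_isUnit_transpose_mul_mul_eq_iff_exists_isAdjointPair
    _ ↔ ∃ X Y, (∀ i, IsAdjointPair (C i) (B i) (A * Y) (X * D)) ∧ A * Y * (X * D) = 1 :=
        hD_surj.exists.trans (exists_congr fun _ => hA_surj.exists)
    _ ↔ ∃ X Y, (∀ i, IsAdjointPair (C i) (C i) Y X) ∧ Y * X = A⁻¹ * D⁻¹ := by
        simp only [isAdjointPair_mul_mul_iff (hAD _) hD_inv,
          mul_mul_mul_eq_one_iff_mul_eq_inv_mul_inv hA hD]

end

/-- Two twisted-equivalent ε-symmetric tuples are isometric iff the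
*-symmetric element E = A⁻¹D⁻¹ of the adjoint algebra of C admits a
decomposition E = X* X. -/
theorem stmt_6 {F : Type*} [Field F] (ε : F) (hε : ε = 1 ∨ ε = -1) (n m : ℕ)
    (B C : Fin m → Matrix (Fin n) (Fin n) F)
    (hB : ∀ i, (B i)ᵀ = ε • B i) (hC : ∀ i, (C i)ᵀ = ε • C i)
    (A D : Matrix (Fin n) (Fin n) F) (hA : IsUnit A) (hD : IsUnit D)
    (hAD : ∀ i, Aᵀ * B i = C i * D) :
    (∃ G : Matrix (Fin n) (Fin n) F, IsUnit G ∧ ∀ i, Gᵀ * B i * G = C i) ↔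
      (∃ X Y : Matrix (Fin n) (Fin n) F,
        (∀ i, Yᵀ * C i = C i * X) ∧ Y * X = A⁻¹ * D⁻¹) :=
  stmt_6_general B C A D hA hD hAD
end

section
/- Let F be a field, r a natural number, A, B ∈ M(r,F), and let S be a finite subset of F with |S| > r. Suppose there exists a vector v ∈ Fʳ with A·v = 0 but B·v not in the column space (range) of A. Then for all but at most r elements λ ∈ S, the rank of λ•A + B is strictly greater than the rank of A; that is, the set {λ ∈ S : rank(λ•A + B) ≤ rank(A)} has at most r elements. -/
open Matrix

/-!
Choose a linear section `s` of `f` over its range and a projection `π` onto that range which kills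
`g v`. Compressing `l • f + g` by `π` and `s` gives the endomorphism `l + π g s` of `range f`, so
unless `l` is an eigenvalue of `-π g s` the map `π (l • f + g)` already has the full rank of `f`.
Since `π` also kills the nonzero value `(l • f + g) v = g v`, the rank of `l • f + g` is then
strictly larger. There are at most `rank f` eigenvalues to avoid.
-/

open LinearMap Module

lemma exists_leftInverse_subtype_apply_eq_zero {K W : Type*} [DivisionRing K] [AddCommGroup W]
    [Module K W] {p : Submodule K W} {w : W} (hw : w ∉ p) :
    ∃ π : W →ₗ[K] p, π ∘ₗ p.subtype = .id ∧ π w = 0 := by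
  have hdisj : Disjoint (K ∙ w) p := (Submodule.disjoint_span_singleton_of_notMem hw).symm
  obtain ⟨q, hwq, hqp⟩ := hdisj.exists_isCompl
  exact ⟨p.projectionOnto q hqp.symm, Submodule.projectionOnto_comp_subtype _,
    (Submodule.projectionOnto_apply_eq_zero_iff _).2 (hwq (Submodule.mem_span_singleton_self w))⟩

universe u in
lemma rank_comp_lt_rank_of_apply_eq_zero {K V : Type*} {W U : Type u} [DivisionRing K]
    [AddCommGroup V] [Module K V] [AddCommGroup W] [Module K W] [AddCommGroup U] [Module K U]
    (p : W →ₗ[K] U) (h : V →ₗ[K] W) [FiniteDimensional K (range (p ∘ₗ h))] {v : V}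
    (hv : h v ≠ 0) (hpv : p (h v) = 0) : (p ∘ₗ h).rank < h.rank := by
  let q : range h →ₗ[K] U := p.domRestrict (range h)
  have hq : range q = range (p ∘ₗ h) := by rw [range_domRestrict, range_comp]
  have hker : 0 < Module.rank K (ker q) :=
    rank_pos_iff_exists_ne_zero.2 ⟨⟨⟨h v, mem_range_self h v⟩, hpv⟩,
      Subtype.coe_ne_coe.1 (Subtype.coe_ne_coe.1 hv)⟩
  calc (p ∘ₗ h).rank = (p ∘ₗ h).rank + 0 := (add_zero _).symm
    _ < (p ∘ₗ h).rank + Module.rank K (ker q) :=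
      (Cardinal.add_lt_add_iff_of_left_lt_aleph0 (rank_lt_aleph0 K _)).2 hker
    _ = h.rank := by rw [LinearMap.rank, ← hq, rank_range_add_rank_ker, LinearMap.rank]

lemma encard_setOf_hasEigenvalue_le_finrank {R M : Type*} [CommRing R] [IsDomain R]
    [AddCommGroup M] [Module R M] [Module.Free R M] [Module.Finite R M] (T : End R M) :
    {μ | T.HasEigenvalue μ}.encard ≤ finrank R M := by
  classical
  have hroots : {μ | T.HasEigenvalue μ} = T.charpoly.roots.toFinset := by
    ext μ
    simp [End.hasEigenvalue_iff_isRoot_charpoly, T.charpoly_monic.ne_zero]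
  rw [hroots, Set.encard_coe_eq_coe_finsetCard, Nat.cast_le, ← T.charpoly_natDegree]
  exact (Multiset.toFinset_card_le _).trans T.charpoly.card_roots'

section LinearMap

variable {F V W : Type*} [Field F] [AddCommGroup V] [Module F V] [AddCommGroup W] [Module F W]
  (f g : V →ₗ[F] W) [FiniteDimensional F (range f)]

lemma exists_end_hasEigenvalue_of_rank_smul_add_le {v : V} (hv : f v = 0) (hgv : g v ∉ range f) :
    ∃ T : End F (range f), ∀ l : F, (l • f + g).rank ≤ f.rank → T.HasEigenvalue l := by
  obtain ⟨π, hπ, hπgv⟩ := exists_leftInverse_subtype_apply_eq_zero hgv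
  obtain ⟨s, hs⟩ := f.rangeRestrict.exists_rightInverse_of_surjective f.range_rangeRestrict
  have hπf : π ∘ₗ f = f.rangeRestrict :=
    LinearMap.ext fun x => LinearMap.congr_fun hπ (f.rangeRestrict x)
  have hπfs : π ∘ₗ f ∘ₗ s = .id := by rw [← comp_assoc, hπf, hs]
  refine ⟨-(π ∘ₗ g ∘ₗ s), fun l hl => ?_⟩
  contrapose! hl
  have hcompression : algebraMap F (End F (range f)) l - -(π ∘ₗ g ∘ₗ s) =
      (π ∘ₗ (l • f + g)) ∘ₗ s := by
    rw [Algebra.algebraMap_eq_smul_one, sub_neg_eq_add, End.one_eq_id, ← hπfs]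
    simp only [comp_add, add_comp, comp_smul, smul_comp, comp_assoc]
  have hsurj : Function.Surjective (π ∘ₗ (l • f + g)) := by
    rw [End.hasEigenvalue_iff_mem_spectrum, spectrum.notMem_iff, hcompression,
      End.isUnit_iff] at hl
    exact Function.Surjective.of_comp (g := s) hl.surjective
  have happly : (l • f + g) v = g v := by simp [hv]
  have hgv_ne : g v ≠ 0 := fun hzero => hgv (hzero ▸ zero_mem _)
  calc f.rank = (π ∘ₗ (l • f + g)).rank := (rank_range_of_surjective _ hsurj).symm
    _ < (l • f + g).rank :=
      rank_comp_lt_rank_of_apply_eq_zero π _ (happly ▸ hgv_ne) (happly ▸ hπgv)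

theorem stmt_7_general (h : ∃ v, f v = 0 ∧ g v ∉ range f) :
    {l : F | (l • f + g).rank ≤ f.rank}.encard ≤ finrank F (range f) := by
  obtain ⟨v, hv, hgv⟩ := h
  obtain ⟨T, hT⟩ := exists_end_hasEigenvalue_of_rank_smul_add_le f g hv hgv
  exact (Set.encard_le_encard hT).trans (encard_setOf_hasEigenvalue_le_finrank T)

end LinearMap

lemma encard_setOf_matrix_rank_smul_add_le {F m n : Type*} [Field F] [Fintype n]
    (A B : Matrix m n F) (h : ∃ v, A *ᵥ v = 0 ∧ B *ᵥ v ∉ range A.mulVecLin) :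
    {l : F | (l • A + B).rank ≤ A.rank}.encard ≤ A.rank := by
  have hrank (C : Matrix m n F) : C.mulVecLin.rank = C.rank := (finrank_eq_rank F _).symm
  have hadd (l : F) : (l • A + B).mulVecLin = l • A.mulVecLin + B.mulVecLin := by
    ext; simp
  have hcard : {l : F | (l • A.mulVecLin + B.mulVecLin).rank ≤ A.mulVecLin.rank}.encard ≤ A.rank :=
    stmt_7_general _ _ h
  simpa only [← hadd, hrank, Nat.cast_le] using hcard

/-- Rank-increasing lemma: if B·ker(A) ⊄ im(A), then for all but at most r
elements λ of a finite set S of scalars, rank(λ•A + B) > rank(A). -/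
theorem stmt_7 {F : Type*} [Field F] (r : ℕ) (A B : Matrix (Fin r) (Fin r) F)
    (S : Finset F) (hS : r < S.card)
    (h : ∃ v : Fin r → F, A.mulVec v = 0 ∧
      B.mulVec v ∉ LinearMap.range A.mulVecLin) :
    {l : F | l ∈ S ∧ (l • A + B).rank ≤ A.rank}.ncard ≤ r :=
  ENat.toNat_le_of_le_natCast <| (Set.encard_le_encard fun _ hl => hl.2).trans <|
    (encard_setOf_matrix_rank_smul_add_le A B h).trans (mod_cast A.rank_le_width)
end

section
/- Let F be a field with char F ≠ 2, and let A be a finite-dimensional unital associative F-algebra equipped with an F-linear involution * (an anti-automorphism of order at most 2 fixing F), such that A is semisimple as a ring. Let a ∈ A be a *-symmetric element (a* = a) that is not a unit. Then there exists a *-symmetric element b ∈ A (b* = b) and an element c ∈ A with a*c = 0 such that b*c does not belong to the right ideal a·A = {a*x : x ∈ A}; in other words, b·Ann_r(a) ⊄ a·A, where Ann_r(a) = {x ∈ A : a*x = 0}. -/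
/-!
Fitting's lemma for right multiplication by the symmetric element `a` yields `p` and `z` with
`p + z * a ^ n = 1` and `p * a ^ n = 0`. Applying `*` to the first equation and multiplying by `p`
on the left gives `p = p * star p`, so `p` is a symmetric idempotent; it commutes with `a`, and it
is nonzero because `a` is not a unit. The last nonzero element `s = a ^ k * p` in the sequence
`p, a * p, a ^ 2 * p, …` is then symmetric and satisfies `a * s = s * a = 0`. As `A` is von Neumann
regular, `s * x * s = s` for some `x`, and the symmetric element `b = x + star x` satisfies
`s * b * s = 2 * s ≠ 0`, whereas `s` annihilates `a * A` from the left.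
-/

theorem exists_pow_mul_ne_zero_and_pow_succ_mul_eq_zero {M : Type*} [MonoidWithZero M] {a p : M}
    {n : ℕ} (hp : p ≠ 0) (h : a ^ n * p = 0) : ∃ k, a ^ k * p ≠ 0 ∧ a ^ (k + 1) * p = 0 :=
  Nat.exists_not_and_succ_of_not_zero_of_exists (p := fun k ↦ a ^ k * p = 0) (by simpa) ⟨n, h⟩

theorem exists_add_mul_pow_eq_one_and_mul_pow_eq_zero {A : Type*} [Ring A] [IsArtinianRing A]
    (a : A) : ∃ n ≠ 0, ∃ p z : A, p + z * a ^ n = 1 ∧ p * a ^ n = 0 := by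
  obtain ⟨n, hcodisjoint, hn⟩ :=
    ((LinearMap.mulRight A a).eventually_codisjoint_ker_pow_range_pow.and
      (Filter.eventually_ne_atTop 0)).exists
  rw [LinearMap.pow_mulRight] at hcodisjoint
  obtain ⟨p, _, hp, ⟨z, rfl⟩, hone⟩ := Submodule.codisjoint_iff_exists_add_eq.mp hcodisjoint 1
  exact ⟨n, hn, p, z, hone, hp⟩

theorem exists_mul_mul_eq_self_of_isSemisimpleRing {A : Type*} [Ring A] [IsSemisimpleRing A]
    (s : A) : ∃ x : A, s * x * s = s := by
  obtain ⟨e, he, hspan⟩ := IsSemisimpleRing.ideal_eq_span_idempotent (Ideal.span {s})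
  obtain ⟨x, rfl⟩ := Ideal.mem_span_singleton'.mp (hspan ▸ Ideal.mem_span_singleton_self e)
  obtain ⟨t, ht⟩ := Ideal.mem_span_singleton'.mp (hspan ▸ Ideal.mem_span_singleton_self s)
  refine ⟨x, ?_⟩
  calc s * x * s = t * ((x * s) * (x * s)) := by rw [← mul_assoc t, ht, mul_assoc]
    _ = s := by rw [he.eq, ht]

theorem isUnit_of_isSelfAdjoint_of_mul_eq_one {M : Type*} [Monoid M] [StarMul M] {b z : M}
    (hb : IsSelfAdjoint b) (h : z * b = 1) : IsUnit b :=
  isUnit_iff_exists_and_exists.mpr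
    ⟨⟨star z, by simpa [hb.star_eq] using congrArg star h⟩, ⟨z, h⟩⟩

section StarSemiring

variable {A : Type*} [Semiring A] [StarRing A]

theorem isSelfAdjoint_of_add_mul_eq_one {p z b : A} (hb : IsSelfAdjoint b) (hone : p + z * b = 1)
    (hpb : p * b = 0) : IsSelfAdjoint p := by
  have hstar : star p + b * star z = 1 := by simpa [hb.star_eq] using congrArg star hone
  have hp : p = p * star p := by
    simpa [mul_add, ← mul_assoc, hpb] using (congrArg (p * ·) hstar).symm
  exact hp ▸ IsSelfAdjoint.mul_star_self p

theorem commute_of_add_mul_eq_one {a b p z : A} (ha : IsSelfAdjoint a) (hp : IsSelfAdjoint p)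
    (hab : Commute a b) (hone : p + z * b = 1) (hbp : b * p = 0) : Commute a p := by
  have hpap : p * a * p = a * p := by
    calc p * a * p = (p + z * b) * (a * p) := by
          rw [add_mul, mul_assoc z, ← mul_assoc b, ← hab.eq, mul_assoc a, hbp, mul_zero, mul_zero,
            add_zero, mul_assoc]
      _ = a * p := by rw [hone, one_mul]
  rw [IsSelfAdjoint.commute_iff ha hp, ← hpap]
  exact ha.conjugate_self hp

theorem exists_isSelfAdjoint_mul_mul_eq_two_mul {s x : A} (hs : IsSelfAdjoint s)
    (hx : s * x * s = s) : ∃ b : A, IsSelfAdjoint b ∧ s * b * s = 2 * s := by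
  have hx' : s * star x * s = s := by
    simpa [hs.star_eq, mul_assoc] using congrArg star hx
  exact ⟨x + star x, .add_star_self x, by rw [mul_add, add_mul, hx, hx', two_mul]⟩

end StarSemiring

section StarRing

variable {A : Type*} [Ring A] [StarRing A]

theorem exists_isSelfAdjoint_ne_zero_mul_eq_zero [IsArtinianRing A] {a : A}
    (ha : IsSelfAdjoint a) (hna : ¬IsUnit a) : ∃ s : A, IsSelfAdjoint s ∧ s ≠ 0 ∧ a * s = 0 := by
  obtain ⟨n, hn, p, z, hone, hpa⟩ := exists_add_mul_pow_eq_one_and_mul_pow_eq_zero a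
  have hp : IsSelfAdjoint p := isSelfAdjoint_of_add_mul_eq_one (ha.pow n) hone hpa
  have hap : a ^ n * p = 0 := by simpa [ha.star_eq, hp.star_eq] using congrArg star hpa
  have hp0 : p ≠ 0 := by
    rintro rfl
    have hza : z * a ^ n = 1 := by simpa using hone
    exact hna <| (isUnit_pow_iff hn).mp <| isUnit_of_isSelfAdjoint_of_mul_eq_one (ha.pow n) hza
  obtain ⟨k, hk, hk'⟩ := exists_pow_mul_ne_zero_and_pow_succ_mul_eq_zero hp0 hap
  have hcomm : Commute a p := commute_of_add_mul_eq_one ha hp (.self_pow a n) hone hap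
  exact ⟨a ^ k * p, (IsSelfAdjoint.commute_iff (ha.pow k) hp).mp (hcomm.pow_left k), hk, by
    rw [← mul_assoc, ← pow_succ', hk']⟩

theorem stmt_8_general [IsSemisimpleRing A] (h2 : IsLeftRegular (2 : A)) (a : A)
    (ha : star a = a) (hna : ¬IsUnit a) :
    ∃ b c : A, star b = b ∧ a * c = 0 ∧ b * c ∉ Set.range (fun x : A => a * x) := by
  obtain ⟨s, hs, hs0, has⟩ := exists_isSelfAdjoint_ne_zero_mul_eq_zero ha hna
  have hsa : s * a = 0 := by simpa [ha, hs.star_eq] using congrArg star has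
  obtain ⟨x, hx⟩ := exists_mul_mul_eq_self_of_isSemisimpleRing s
  obtain ⟨b, hb, hsbs⟩ := exists_isSelfAdjoint_mul_mul_eq_two_mul hs hx
  refine ⟨b, s, hb, has, ?_⟩
  rintro ⟨y, hy : a * y = b * s⟩
  have h2s : 2 * s = 0 := by rw [← hsbs, mul_assoc, ← hy, ← mul_assoc, hsa, zero_mul]
  exact hs0 (h2.mul_left_eq_zero_iff.mp h2s)

end StarRing

/-- Lemma (key): in a finite-dimensional semisimple *-algebra over a field of
characteristic ≠ 2, for every *-symmetric zero divisor a there is a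
*-symmetric b with b·Ann_r(a) ⊄ a·A. -/
theorem stmt_8 {F A : Type*} [Field F] [StarRing F] [TrivialStar F]
    (h2 : (2 : F) ≠ 0)
    [Ring A] [Algebra F A] [StarRing A] [StarModule F A]
    [FiniteDimensional F A] [IsSemisimpleRing A]
    (a : A) (ha : star a = a) (hna : ¬ IsUnit a) :
    ∃ b c : A, star b = b ∧ a * c = 0 ∧
      b * c ∉ Set.range (fun x : A => a * x) := by
  have h2A : IsUnit (2 : A) := by
    simpa only [map_ofNat] using (IsUnit.mk0 _ h2).map (algebraMap F A)
  exact stmt_8_general h2A.isRegular.left a ha hna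
end

section
/- Let F be a field with char F ≠ 2, and let A be a finite-dimensional unital associative F-algebra equipped with an F-linear involution * (an anti-automorphism of order at most 2 fixing F). Let a ∈ A be a *-symmetric element (a* = a) such that the right ideal a·A has a left identity element, i.e., there exist e, d ∈ A with e = a*d and e*a = a. Then the right annihilator Ann_r(a) = {x ∈ A : a*x = 0} is generated as a right ideal by a *-symmetric element: there exists b ∈ A with b* = b such that {x ∈ A : a*x = 0} = {b*y : y ∈ A}. -/
/-!
Write `J` for the radical of `A`. It suffices to find a symmetric unit `u` with `a * u * a = a`:
then `b = u - u * a * u` generates the right annihilator of `a`. If such a unit exists over `A ⧸ J`,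
lift it to a symmetric unit `u` of `A`; the error `a * u * a - a` lies in `J` and is removed by
subtracting `s * (a * u * a - a) * s` from `u`, where `s` is a symmetric inner inverse of `a`.

Over the semisimple ring `A ⧸ J`, let `s` be a symmetric inner inverse of `a`. If `s` is not a
unit, it is annihilated by some symmetric `c ≠ 0`. Then the left ideal of `a + c` is strictly larger
than that of `a`, and every inner inverse of `a + c` is one of `a`, so Noetherian induction applies.
-/

section Radical

variable {R : Type*} [Ring R]

theorem isUnit_of_sub_one_mem_ringJacobson {x : R} (hx : x - 1 ∈ Ring.jacobson R) : IsUnit x := by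
  have exists_left_inverse {y : R} (hy : y - 1 ∈ Ring.jacobson R) : ∃ z, z * y = 1 := by
    rw [← Ideal.jacobson_bot] at hy
    obtain ⟨z, hz⟩ := Ideal.exists_mul_sub_mem_of_sub_one_mem_jacobson y hy
    exact ⟨z, sub_eq_zero.1 hz⟩
  obtain ⟨y, hyx⟩ := exists_left_inverse hx
  have hy : y - 1 ∈ Ring.jacobson R := by
    have h : y - 1 = -(y * (x - 1)) := by rw [mul_sub, hyx, mul_one, neg_sub]
    exact h ▸ neg_mem (Ideal.mul_mem_left _ y hx)
  obtain ⟨z, hzy⟩ := exists_left_inverse hy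
  exact isUnit_iff_exists.2 ⟨y, left_inv_eq_right_inv hzy hyx ▸ hzy, hyx⟩

instance isLocalHom_mk_ringJacobson : IsLocalHom (Ideal.Quotient.mk (Ring.jacobson R)) where
  map_nonunit x hx := by
    obtain ⟨y', hxy, hyx⟩ := isUnit_iff_exists.1 hx
    obtain ⟨y, rfl⟩ := Ideal.Quotient.mk_surjective y'
    rw [← map_mul, ← map_one (Ideal.Quotient.mk _), Ideal.Quotient.eq] at hxy hyx
    obtain ⟨r, hr⟩ := (isUnit_of_sub_one_mem_ringJacobson hxy).exists_right_inv
    obtain ⟨l, hl⟩ := (isUnit_of_sub_one_mem_ringJacobson hyx).exists_left_inv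
    exact isUnit_iff_exists_and_exists.2
      ⟨⟨y * r, by rw [← mul_assoc, hr]⟩, ⟨l * y, by rw [mul_assoc, hl]⟩⟩

theorem star_mem_ringJacobson [StarRing R] {x : R} (hx : x ∈ Ring.jacobson R) :
    star x ∈ Ring.jacobson R := by
  rw [← Ideal.jacobson_bot, Ideal.mem_jacobson_iff]
  intro y
  have hunit : IsUnit (x * star y + 1) :=
    isUnit_of_sub_one_mem_ringJacobson (by simpa using Ideal.mul_mem_right (star y) _ hx)
  obtain ⟨z, hz⟩ := hunit.star.exists_left_inv
  refine ⟨z, sub_eq_zero.2 ?_⟩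
  simpa [mul_add, mul_assoc] using hz

/-- The involution on the quotient of a star ring by a star-stable two-sided ideal. -/
abbrev quotientStarRing [StarRing R] (I : Ideal R) [I.IsTwoSided]
    (hI : ∀ x ∈ I, star x ∈ I) : StarRing (R ⧸ I) where
  star := QuotientAddGroup.map _ _ (starAddEquiv : R ≃+ R).toAddMonoidHom hI
  star_involutive := by
    rintro ⟨x⟩
    exact congrArg (Ideal.Quotient.mk I) (star_star x)
  star_mul := by
    rintro ⟨x⟩ ⟨y⟩
    exact congrArg (Ideal.Quotient.mk I) (star_mul x y)
  star_add := map_add _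

end Radical

section Annihilator

theorem exists_pow_eq_mul_pow_succ {R : Type*} [Semiring R] [IsArtinianRing R] (a : R) :
    ∃ (n : ℕ) (y : R), a ^ n = y * a ^ (n + 1) := by
  have hle (k : ℕ) : Ideal.span {a ^ (k + 1)} ≤ Ideal.span {a ^ k} := by
    rw [pow_succ', Ideal.span_singleton_le_iff_mem]
    exact Ideal.mul_mem_left _ a (Ideal.mem_span_singleton_self _)
  obtain ⟨n, hn⟩ := IsArtinian.monotone_stabilizes
    ⟨fun k => OrderDual.toDual (Ideal.span {a ^ k}), monotone_nat_of_le_succ hle⟩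
  have hmem : a ^ n ∈ Ideal.span {a ^ (n + 1)} := by
    rw [show Ideal.span {a ^ (n + 1)} = Ideal.span {a ^ n} from (hn (n + 1) n.le_succ).symm]
    exact Ideal.mem_span_singleton_self _
  obtain ⟨y, hy⟩ := Ideal.mem_span_singleton'.1 hmem
  exact ⟨n, y, hy.symm⟩

theorem isUnit_or_exists_isSelfAdjoint_mul_eq_zero {R : Type*} [Ring R] [IsArtinianRing R]
    [StarRing R] {a : R} (ha : IsSelfAdjoint a) :
    IsUnit a ∨ ∃ z, IsSelfAdjoint z ∧ z ≠ 0 ∧ a * z = 0 := by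
  classical
  -- For the least `m` with `a ^ m = y * a ^ (m + 1)`, the element `y * a ^ m` equals
  -- `y * a ^ (m + 1) * star y` and so is symmetric; if `m = n + 1`, take `z = a ^ n - y * a ^ m`.
  have hex := exists_pow_eq_mul_pow_succ a
  obtain ⟨y, hy⟩ := Nat.find_spec hex
  rcases hn : Nat.find hex with _ | n
  · left
    rw [hn, pow_zero, zero_add, pow_one] at hy
    refine isUnit_iff_exists_and_exists.2 ⟨⟨star y, ?_⟩, ⟨y, hy.symm⟩⟩
    simpa [ha.star_eq] using congrArg star hy.symm
  · right
    rw [hn] at hy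
    have hpow (k : ℕ) : star (a ^ k) = a ^ k := (ha.pow k).star_eq
    have hy' : a ^ (n + 1) = a ^ (n + 2) * star y := by simpa [hpow] using congrArg star hy
    have hsymm : IsSelfAdjoint (y * a ^ (n + 1)) := by
      have := (ha.pow (n + 2)).conjugate y
      rwa [mul_assoc, ← hy'] at this
    have hz : IsSelfAdjoint (a ^ n - y * a ^ (n + 1)) := (ha.pow n).sub hsymm
    refine ⟨a ^ n - y * a ^ (n + 1), hz, fun h => ?_, ?_⟩
    · exact Nat.find_min hex (hn ▸ n.lt_succ_self) ⟨y, sub_eq_zero.1 h⟩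
    · have : (a ^ n - y * a ^ (n + 1)) * a = 0 := by
        rw [sub_mul, mul_assoc, ← pow_succ, ← pow_succ, ← hy, sub_self]
      simpa [ha.star_eq, hz.star_eq] using congrArg star this

end Annihilator

section SymmPart

theorem commute_invOf_two {R : Type*} [Semiring R] [Invertible (2 : R)] (x : R) :
    Commute (⅟2) x :=
  (Commute.ofNat_left 2 x).invOf_left

variable {R : Type*} [Semiring R] [StarRing R] [Invertible (2 : R)]

/-- The symmetric part `(x + x*) / 2` of an element of a star ring containing `1/2`; unlike
`selfAdjointPart`, it does not refer to a ring of scalars. -/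
def symmPart (x : R) : R := ⅟2 * (x + star x)

theorem isSelfAdjoint_symmPart (x : R) : IsSelfAdjoint (symmPart x) := by
  have h : IsSelfAdjoint (⅟2 : R) := (IsSelfAdjoint.invOf_iff 2).2 (.ofNat 2)
  exact (h.commute_iff (.add_star_self x)).1 (commute_invOf_two _)

theorem symmPart_eq_self {x : R} (hx : IsSelfAdjoint x) : symmPart x = x := by
  rw [symmPart, hx.star_eq, ← two_mul, invOf_mul_cancel_left]

theorem symmPart_conjugate {a : R} (ha : IsSelfAdjoint a) (x : R) :
    symmPart (a * x * a) = a * symmPart x * a := by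
  simp only [symmPart, star_mul, ha.star_eq, ← mul_assoc, mul_add, add_mul,
    (commute_invOf_two a).eq]

theorem map_symmPart_eq_self {S : Type*} [Semiring S] [StarRing S] (f : R →+* S)
    (hf : ∀ x, f (star x) = star (f x)) {x : R} (hx : IsSelfAdjoint (f x)) :
    f (symmPart x) = f x := by
  calc f (symmPart x) = f ⅟2 * (f x + f x) := by rw [symmPart, map_mul, map_add, hf, hx.star_eq]
    _ = f (⅟2 * (x + x)) := by rw [map_mul, map_add]
    _ = f x := by rw [← two_mul, invOf_mul_cancel_left]

end SymmPart

section InnerInverse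

/-- `x` is an inner inverse (von Neumann generalized inverse) of `a`. -/
def IsInnerInverse {M : Type*} [Mul M] (x a : M) : Prop := a * x * a = a

variable {R : Type*} [Ring R]

namespace IsInnerInverse

theorem eq {M : Type*} [Mul M] {x a : M} (h : IsInnerInverse x a) : a * x * a = a := h

theorem span_singleton_lt_span_singleton_add {a s c : R} (has : IsInnerInverse s a)
    (hsc : s * c = 0) (hcs : c * s = 0) (hc : c ≠ 0) :
    Ideal.span {a} < Ideal.span {a + c} := by
  refine lt_of_le_of_ne ?_ fun heq => hc ?_
  · rw [Ideal.span_singleton_le_iff_mem, Ideal.mem_span_singleton']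
    exact ⟨a * s, by rw [mul_add, has.eq, mul_assoc, hsc, mul_zero, add_zero]⟩
  · have hac : a + c ∈ Ideal.span {a} := heq ▸ Ideal.mem_span_singleton_self _
    obtain ⟨x, rfl⟩ := Ideal.mem_span_singleton'.1
      ((add_mem_cancel_left (Ideal.mem_span_singleton_self a)).1 hac)
    calc x * a = x * (a * s * a) := by rw [has.eq]
      _ = x * a * s * a := by simp only [mul_assoc]
      _ = 0 := by rw [hcs, zero_mul]

theorem of_add {a s c u : R} (has : IsInnerInverse s a) (hsc : s * c = 0) (hcs : c * s = 0)
    (hu : IsInnerInverse u (a + c)) : IsInnerInverse u a := by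
  have hl : a * s * (a + c) = a := by rw [mul_add, has.eq, mul_assoc, hsc, mul_zero, add_zero]
  have hr : (a + c) * (s * a) = a := by rw [← mul_assoc, add_mul, hcs, add_zero, has.eq]
  calc a * u * a = (a * s * (a + c)) * u * ((a + c) * (s * a)) := by rw [hl, hr]
    _ = a * s * ((a + c) * u * (a + c)) * (s * a) := by simp only [mul_assoc]
    _ = a := by rw [hu.eq, hl, ← mul_assoc, has.eq]

theorem sub_mul_sub_mul {a s : R} (has : IsInnerInverse s a) (x : R) :
    IsInnerInverse (x - s * (a * x * a - a) * s) a := by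
  calc a * (x - s * (a * x * a - a) * s) * a
      = a * x * a - (a * s * a * x * (a * s * a) - a * s * a * s * a) := by noncomm_ring
    _ = a := by rw [has.eq, has.eq, sub_sub_cancel]

theorem symmPart [StarRing R] [Invertible (2 : R)] {a x : R} (ha : IsSelfAdjoint a)
    (h : IsInnerInverse x a) : IsInnerInverse (symmPart x) a := by
  rw [IsInnerInverse, ← symmPart_conjugate ha, h.eq, symmPart_eq_self ha]

theorem setOf_mul_eq_zero {a u : R} (hunit : IsUnit u) (h : IsInnerInverse u a) :
    {x | a * x = 0} = Set.range ((u - u * a * u) * ·) := by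
  obtain ⟨v, huv⟩ := hunit.exists_right_inv
  refine Set.Subset.antisymm (fun x (hx : a * x = 0) => ⟨v * x, ?_⟩) ?_
  · calc (u - u * a * u) * (v * x) = u * v * x - u * a * (u * v) * x := by noncomm_ring
      _ = x := by rw [huv, one_mul, mul_one, mul_assoc, hx, mul_zero, sub_zero]
  · rintro _ ⟨y, rfl⟩
    calc a * ((u - u * a * u) * y) = (a * u - a * u * a * u) * y := by noncomm_ring
      _ = 0 := by rw [h.eq, sub_self, zero_mul]

end IsInnerInverse

theorem exists_isInnerInverse [IsSemisimpleRing R] (a : R) : ∃ x, IsInnerInverse x a := by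
  obtain ⟨e, he, hspan⟩ := IsSemisimpleRing.ideal_eq_span_idempotent (Ideal.span {a})
  obtain ⟨x, hx⟩ := Ideal.mem_span_singleton'.1 (hspan ▸ Ideal.mem_span_singleton_self e)
  obtain ⟨y, hy⟩ := Ideal.mem_span_singleton'.1 (hspan ▸ Ideal.mem_span_singleton_self a)
  exact ⟨x, by rw [IsInnerInverse, mul_assoc, hx, ← hy, mul_assoc, he.eq]⟩

variable [StarRing R] [Invertible (2 : R)]

theorem exists_isUnit_isSelfAdjoint_isInnerInverse_of_isSemisimpleRing [IsSemisimpleRing R] {a : R}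
    (ha : IsSelfAdjoint a) : ∃ u, IsUnit u ∧ IsSelfAdjoint u ∧ IsInnerInverse u a := by
  induction hI : Ideal.span {a} using WellFoundedGT.induction generalizing a with
  | ind I ih =>
    obtain ⟨x, hx⟩ := exists_isInnerInverse a
    have hs := isSelfAdjoint_symmPart x
    have has := hx.symmPart ha
    rcases isUnit_or_exists_isSelfAdjoint_mul_eq_zero hs with hunit | ⟨c, hc, hc0, hsc⟩
    · exact ⟨symmPart x, hunit, hs, has⟩
    have hcs : c * symmPart x = 0 := by
      simpa [hs.star_eq, hc.star_eq] using congrArg star hsc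
    obtain ⟨u, hunit, hu, hua⟩ :=
      ih _ (hI ▸ has.span_singleton_lt_span_singleton_add hsc hcs hc0) (ha.add hc) rfl
    exact ⟨u, hunit, hu, has.of_add hsc hcs hua⟩

theorem exists_isUnit_isSelfAdjoint_isInnerInverse_of_surjective {S : Type*} [Ring S] [StarRing S]
    (f : R →+* S) [IsLocalHom f] (hf : Function.Surjective f)
    (hstar : ∀ x, f (star x) = star (f x)) {a d : R} (ha : IsSelfAdjoint a)
    (hd : IsInnerInverse d a) {u : S} (hunit : IsUnit u) (hu : IsSelfAdjoint u)
    (hua : IsInnerInverse u (f a)) :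
    ∃ v, IsUnit v ∧ IsSelfAdjoint v ∧ IsInnerInverse v a := by
  obtain ⟨x, rfl⟩ := hf u
  have hx : f (symmPart x) = f x := map_symmPart_eq_self f hstar hu
  have hxs := isSelfAdjoint_symmPart x
  have hds := isSelfAdjoint_symmPart d
  set y := symmPart x
  set s := symmPart d
  have has : IsInnerInverse s a := hd.symmPart ha
  have hfv : f (y - s * (a * y * a - a) * s) = f x := by
    rw [map_sub, map_mul, map_mul, map_sub, map_mul, map_mul, hx, hua.eq, sub_self, mul_zero,
      zero_mul, sub_zero]
  exact ⟨y - s * (a * y * a - a) * s, .of_map f _ (hfv ▸ hunit),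
    hxs.sub (((hxs.conjugate_self ha).sub ha).conjugate_self hds), has.sub_mul_sub_mul y⟩

theorem IsInnerInverse.exists_isUnit_isSelfAdjoint [IsSemisimpleRing (R ⧸ Ring.jacobson R)]
    {a d : R} (ha : IsSelfAdjoint a) (hd : IsInnerInverse d a) :
    ∃ u, IsUnit u ∧ IsSelfAdjoint u ∧ IsInnerInverse u a := by
  let : StarRing (R ⧸ Ring.jacobson R) :=
    quotientStarRing (Ring.jacobson R) fun _ => star_mem_ringJacobson
  let π := Ideal.Quotient.mk (Ring.jacobson R)
  let : Invertible (2 : R ⧸ Ring.jacobson R) := (Invertible.map π 2).copy 2 (map_ofNat π 2).symm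
  have hπa : IsSelfAdjoint (π a) := congrArg π ha.star_eq
  obtain ⟨u, hunit, hu, hua⟩ :=
    exists_isUnit_isSelfAdjoint_isInnerInverse_of_isSemisimpleRing hπa
  exact exists_isUnit_isSelfAdjoint_isInnerInverse_of_surjective π Ideal.Quotient.mk_surjective
    (fun _ => rfl) ha hd hunit hu hua

end InnerInverse

theorem stmt_9_general {A : Type*} [Ring A] [StarRing A] [IsSemisimpleRing (A ⧸ Ring.jacobson A)]
    (h2 : IsUnit (2 : A)) (a : A) (ha : star a = a) (hid : ∃ e d : A, e = a * d ∧ e * a = a) :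
    ∃ b : A, star b = b ∧ {x : A | a * x = 0} = Set.range (fun y : A => b * y) := by
  let : Invertible (2 : A) := h2.invertible
  obtain ⟨_, d, rfl, hd⟩ := hid
  have ha : IsSelfAdjoint a := ha
  obtain ⟨u, hunit, hu, hua⟩ := IsInnerInverse.exists_isUnit_isSelfAdjoint ha hd
  exact ⟨u - u * a * u, hu.sub (ha.conjugate_self hu), hua.setOf_mul_eq_zero hunit⟩

/-- If a is a *-symmetric element of a finite-dimensional *-algebra over a
field of characteristic ≠ 2 such that the right ideal a·A has a left identity,
then the right annihilator of a is generated as a right ideal by a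
*-symmetric element. -/
theorem stmt_9 {F A : Type*} [Field F] [StarRing F] [TrivialStar F]
    (h2 : (2 : F) ≠ 0)
    [Ring A] [Algebra F A] [StarRing A] [StarModule F A]
    [FiniteDimensional F A]
    (a : A) (ha : star a = a)
    (hid : ∃ e d : A, e = a * d ∧ e * a = a) :
    ∃ b : A, star b = b ∧
      {x : A | a * x = 0} = Set.range (fun y : A => b * y) := by
  have : IsArtinianRing A := .of_finite F A
  have h2A : IsUnit (2 : A) := map_ofNat (algebraMap F A) 2 ▸ h2.isUnit.map (algebraMap F A)
  exact stmt_9_general h2A a ha hid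
end

section
/- Let F be a field with char F ≠ 2, and let A be a finite-dimensional unital associative F-algebra equipped with an F-linear involution *, such that A is semisimple as a ring. Let a ∈ A satisfy a* = a and suppose a is not a unit (a zero divisor). Suppose further there is no proper *-symmetric idempotent commuting with a, i.e., every e ∈ A with e*e = e, e* = e and e*a = a*e satisfies e = 0 or e = 1. Then (1) a is nilpotent, and (2) A is *-simple: every two-sided ideal I of A with I* = I satisfies I = 0 or I = A. -/
/-!
In an Artinian ring the left ideals generated by the powers of `a` stabilize, so `b = a ^ n`
satisfies `x * (b * b) = b` for some `n ≠ 0` and some `x`. If `a` is self-adjoint, applying the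
involution gives `b * b * star x = b`, and this two-sided equation makes `x * b = b * star x` a
star projection which commutes with `a` and acts as the identity on `b`. If this projection is `0`
then `a` is nilpotent, and if it is `1` then `a` is a unit.

In a semisimple ring a two-sided ideal has a right identity. When the ideal is star-stable, this
right identity is also a left identity, hence a central star projection generating the ideal.
-/

section Semigroup

variable {S : Type*} [Semigroup S] {a b x y : S}

theorem mul_eq_mul_of_mul_mul_self_eq (hx : x * (b * b) = b) (hy : b * b * y = b) :
    x * b = b * y :=
  calc
    x * b = x * (b * b) * y := by rw [mul_assoc, hy]
    _ = b * y := by rw [hx]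

theorem isIdempotentElem_mul_of_mul_mul_self_eq (hx : x * (b * b) = b) (hy : b * b * y = b) :
    IsIdempotentElem (x * b) :=
  have hxy := mul_eq_mul_of_mul_mul_self_eq hx hy
  calc
    x * b * (x * b) = x * b * (b * y) := by rw [hxy]
    _ = x * (b * b) * y := by simp only [mul_assoc]
    _ = x * b := by rw [hx, hxy]

theorem commute_mul_of_mul_mul_self_eq (hx : x * (b * b) = b) (hy : b * b * y = b)
    (hab : Commute a b) : Commute (x * b) a :=
  calc
    x * b * a = x * a * b := by rw [mul_assoc, ← hab.eq, mul_assoc]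
    _ = x * a * (b * b * y) := by rw [hy]
    _ = x * (a * (b * b)) * y := by simp only [mul_assoc]
    _ = x * (b * b) * (a * y) := by rw [(hab.mul_right hab).eq]; simp only [mul_assoc]
    _ = a * (b * y) := by rw [hx, ← mul_assoc, ← hab.eq, mul_assoc]
    _ = a * (x * b) := by rw [mul_eq_mul_of_mul_mul_self_eq hx hy]

variable [StarMul S]

theorem mul_mul_star_eq_of_mul_mul_self_eq (hb : IsSelfAdjoint b) (hx : x * (b * b) = b) :
    b * b * star x = b := by
  simpa only [star_mul, hb.star_eq] using congrArg star hx

theorem isStarProjection_mul_of_mul_mul_self_eq (hb : IsSelfAdjoint b)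
    (hx : x * (b * b) = b) : IsStarProjection (x * b) := by
  have hy := mul_mul_star_eq_of_mul_mul_self_eq hb hx
  refine ⟨isIdempotentElem_mul_of_mul_mul_self_eq hx hy, ?_⟩
  rw [IsSelfAdjoint, star_mul, hb.star_eq, mul_eq_mul_of_mul_mul_self_eq hx hy]

end Semigroup

theorem exists_mul_pow_mul_pow_eq_pow {R : Type*} [Semiring R] [IsArtinianRing R] (a : R) :
    ∃ n ≠ 0, ∃ x, x * (a ^ n * a ^ n) = a ^ n := by
  have hanti : Antitone fun n : ℕ => Ideal.span {a ^ n} := antitone_nat_of_succ_le fun n => by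
    rw [Ideal.span_singleton_le_iff_mem, pow_succ']
    exact Ideal.mul_mem_left _ a (Ideal.mem_span_singleton_self _)
  obtain ⟨n, hn⟩ := IsArtinian.monotone_stabilizes ⟨_, hanti.dual_right⟩
  have hspan : Ideal.span {a ^ (n + 1)} = Ideal.span {a ^ (n + 1 + (n + 1))} :=
    (hn _ (by omega)).symm.trans (hn _ (by omega))
  obtain ⟨x, hx⟩ := Ideal.mem_span_singleton'.1 (hspan ▸ Ideal.mem_span_singleton_self _)
  exact ⟨n + 1, n.succ_ne_zero, x, by rwa [← pow_add]⟩

theorem isUnit_or_isNilpotent_of_forall_isStarProjection_commute {R : Type*} [Semiring R]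
    [StarRing R] [IsArtinianRing R] {a : R} (ha : IsSelfAdjoint a)
    (hproj : ∀ e : R, IsStarProjection e → Commute e a → e = 0 ∨ e = 1) :
    IsUnit a ∨ IsNilpotent a := by
  obtain ⟨n, hn, x, hx⟩ := exists_mul_pow_mul_pow_eq_pow a
  have hb : IsSelfAdjoint (a ^ n) := ha.pow n
  have hy := mul_mul_star_eq_of_mul_mul_self_eq hb hx
  have hcomm : Commute (x * a ^ n) a :=
    commute_mul_of_mul_mul_self_eq hx hy (Commute.self_pow a n)
  rcases hproj _ (isStarProjection_mul_of_mul_mul_self_eq hb hx) hcomm with hzero | hone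
  · exact .inr ⟨n, by rw [← hx, ← mul_assoc, hzero, zero_mul]⟩
  · have hone' : a ^ n * star x = 1 := by rw [← mul_eq_mul_of_mul_mul_self_eq hx hy, hone]
    exact .inl ((isUnit_pow_iff hn).1 (isUnit_iff_exists_and_exists.2 ⟨⟨_, hone'⟩, ⟨_, hone⟩⟩))

theorem isStarProjection_of_star_mul_self_eq_star {M : Type*} [Mul M] [StarMul M] {e : M}
    (he : star e * e = star e) : IsStarProjection e := by
  have he' : star e * e = e := by
    simpa only [star_mul, star_star] using congrArg star he
  have hstar : star e = e := he.symm.trans he'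
  exact ⟨by rwa [hstar] at he', hstar⟩

theorem commute_of_mem_of_forall_mul_eq_self {R : Type*} [NonUnitalRing R] [StarRing R]
    {I : TwoSidedIdeal R} {e : R} (hI : ∀ x ∈ I, star x ∈ I) (he : e ∈ I)
    (hright : ∀ x ∈ I, x * e = x) (y : R) : Commute e y := by
  have hstar : star e = e :=
    (isStarProjection_of_star_mul_self_eq_star (hright _ (hI e he))).isSelfAdjoint
  have hleft : ∀ x ∈ I, e * x = x := fun x hx => by
    simpa only [star_mul, star_star, hstar] using congrArg star (hright _ (hI x hx))
  calc
    e * y = e * y * e := (hright _ (I.mul_mem_right e y he)).symm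
    _ = y * e := by rw [mul_assoc, hleft _ (I.mul_mem_left y e he)]

theorem exists_mem_forall_mul_eq_self_of_isSemisimpleRing {R : Type*} [Ring R]
    [IsSemisimpleRing R] (I : Ideal R) : ∃ e ∈ I, ∀ x ∈ I, x * e = x := by
  obtain ⟨e, he, rfl⟩ := IsSemisimpleRing.ideal_eq_span_idempotent I
  refine ⟨e, Ideal.mem_span_singleton_self e, fun x hx => ?_⟩
  obtain ⟨y, rfl⟩ := Ideal.mem_span_singleton'.1 hx
  rw [mul_assoc, he.eq]

theorem eq_bot_or_eq_top_of_forall_isStarProjection_central {R : Type*} [Ring R] [StarRing R]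
    [IsSemisimpleRing R]
    (hproj : ∀ e : R, IsStarProjection e → (∀ y, Commute e y) → e = 0 ∨ e = 1)
    (I : TwoSidedIdeal R) (hI : ∀ x ∈ I, star x ∈ I) : I = ⊥ ∨ I = ⊤ := by
  obtain ⟨e, he, hright⟩ := exists_mem_forall_mul_eq_self_of_isSemisimpleRing I.asIdeal
  simp only [TwoSidedIdeal.mem_asIdeal] at he hright
  rcases hproj e (isStarProjection_of_star_mul_self_eq_star (hright _ (hI e he)))
    (commute_of_mem_of_forall_mul_eq_self hI he hright) with rfl | rfl
  · refine .inl (eq_bot_iff.2 fun x hx => ?_)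
    rw [TwoSidedIdeal.mem_bot, ← hright x hx, mul_zero]
  · exact .inr (I.one_mem_iff.1 he)

theorem stmt_10_general {A : Type*} [Ring A] [StarRing A] [IsSemisimpleRing A]
    {a : A} (ha : IsSelfAdjoint a) (hna : ¬ IsUnit a)
    (hproj : ∀ e : A, IsStarProjection e → Commute e a → e = 0 ∨ e = 1) :
    IsNilpotent a ∧ ∀ I : TwoSidedIdeal A, (∀ x ∈ I, star x ∈ I) → I = ⊥ ∨ I = ⊤ :=
  ⟨(isUnit_or_isNilpotent_of_forall_isStarProjection_commute ha hproj).resolve_left hna,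
    eq_bot_or_eq_top_of_forall_isStarProjection_central fun e he hcentral =>
      hproj e he (hcentral a)⟩

/-- In a finite-dimensional semisimple *-algebra over a field of
characteristic ≠ 2, if a *-symmetric zero divisor a commutes with no proper
*-symmetric idempotent, then a is nilpotent and the algebra is *-simple. -/
theorem stmt_10 {F A : Type*} [Field F] [StarRing F] [TrivialStar F]
    (h2 : (2 : F) ≠ 0)
    [Ring A] [Algebra F A] [StarRing A] [StarModule F A]
    [FiniteDimensional F A] [IsSemisimpleRing A]
    (a : A) (ha : star a = a) (hna : ¬ IsUnit a)
    (hidem : ∀ e : A, e * e = e → star e = e → e * a = a * e → e = 0 ∨ e = 1) :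
    (∃ k : ℕ, 1 ≤ k ∧ a ^ k = 0) ∧
      (∀ I : TwoSidedIdeal A, (∀ x ∈ I, star x ∈ I) → I = ⊥ ∨ I = ⊤) :=
  (stmt_10_general ha hna fun e he hcomm => hidem e he.1 he.2 hcomm).imp_left
    fun ⟨k, hk⟩ => ⟨k + 1, k.succ_pos, pow_eq_zero_of_le k.le_succ hk⟩
end

section
/- Let F be a field, let A be a unital associative F-algebra, and let S ⊆ A be a finite-dimensional non-unital F-subalgebra of A (an F-linear subspace closed under multiplication). Suppose S is not nilpotent, i.e., for every k ≥ 1 there exist elements s₁,…,s_k ∈ S with s₁*s₂*⋯*s_k ≠ 0. Then every subset V ⊆ S whose F-linear span equals S contains a non-nilpotent element: there exists x ∈ V such that xᵏ ≠ 0 for all k ≥ 1. In particular, every F-basis of S contains a non-nilpotent element. -/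
/-!
Suppose that `S` is spanned by nilpotent elements and put `B = F·1 + S`, a finite-dimensional
algebra in which `S` is an ideal. For `s ∈ S`, every `b * s` with `b : B` is a linear combination
of nilpotent elements. After base change to the algebraic closure and reduction modulo the
Jacobson radical, `B` becomes a product of matrix algebras, where such combinations have trace
zero; as the trace form is nondegenerate, the image of `s` vanishes. Hence `S` lies in the
Jacobson radical of `B`, and is therefore nilpotent.
-/

open scoped TensorProduct

/-- The linear span of the nilpotent elements of an algebra. In a finite-dimensional algebra over
a field, the elements all of whose left multiples lie in it belong to the Jacobson radical. -/
def nilpotentSpan (R A : Type*) [Semiring R] [Semiring A] [Module R A] : Submodule R A :=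
  Submodule.span R {x | IsNilpotent x}

section Functoriality

theorem map_mem_nilpotentSpan {R A B : Type*} (K : Type*) [CommSemiring R] [Semiring K]
    [Semiring A] [Semiring B] [SMul R K] [Algebra R A] [Algebra R B] [Module K B]
    [IsScalarTower R K B] (f : A →ₐ[R] B) {x : A} (hx : x ∈ nilpotentSpan R A) :
    f x ∈ nilpotentSpan K B := by
  have hle : nilpotentSpan R A ≤
      ((nilpotentSpan K B).restrictScalars R).comap f.toLinearMap :=
    Submodule.span_le.mpr fun _ hy ↦ Submodule.subset_span (IsNilpotent.map hy f)
  exact hle hx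

variable {R A B : Type*} [CommSemiring R] [Semiring A] [Semiring B] [Algebra R A] [Algebra R B]
  {x : A}

theorem mul_map_mem_nilpotentSpan_of_surjective {f : A →ₐ[R] B} (hf : Function.Surjective f)
    (hx : ∀ a, a * x ∈ nilpotentSpan R A) (b : B) : b * f x ∈ nilpotentSpan R B := by
  obtain ⟨a, rfl⟩ := hf b
  rw [← map_mul]
  exact map_mem_nilpotentSpan R f (hx a)

theorem mul_one_tmul_mem_nilpotentSpan (K : Type*) [CommSemiring K] [Algebra R K]
    (hx : ∀ a, a * x ∈ nilpotentSpan R A) (t : K ⊗[R] A) :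
    t * 1 ⊗ₜ x ∈ nilpotentSpan K (K ⊗[R] A) := by
  induction t with
  | zero => rw [zero_mul]; exact zero_mem _
  | add s t hs ht => rw [add_mul]; exact add_mem hs ht
  | tmul c a =>
    have hsmul : c ⊗ₜ[R] a * 1 ⊗ₜ x = c • (1 : K) ⊗ₜ[R] (a * x) := by
      rw [Algebra.TensorProduct.tmul_mul_tmul, TensorProduct.smul_tmul', smul_eq_mul]
    rw [hsmul]
    exact Submodule.smul_mem _ c
      (map_mem_nilpotentSpan K (Algebra.TensorProduct.includeRight : A →ₐ[R] K ⊗[R] A) (hx a))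

theorem map_val_nilpotentSpan (S : Subalgebra R A) :
    (nilpotentSpan R S).map S.val.toLinearMap = Submodule.span R {a ∈ S | IsNilpotent a} := by
  have himage : S.val '' {a | IsNilpotent a} = {a ∈ S | IsNilpotent a} := by
    ext a
    constructor
    · rintro ⟨a, ha, rfl⟩
      exact ⟨a.2, ha.map S.val⟩
    · rintro ⟨haS, ha⟩
      exact ⟨⟨a, haS⟩, (IsNilpotent.map_iff (f := S.val) Subtype.val_injective).mp ha, rfl⟩
  rw [← himage]
  exact Submodule.map_span _ _

end Functoriality

section Matrix

variable {R n : Type*} [CommRing R] [IsReduced R] [Fintype n] [DecidableEq n]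

theorem trace_eq_zero_of_mem_nilpotentSpan {M : Matrix n n R}
    (hM : M ∈ nilpotentSpan R (Matrix n n R)) : M.trace = 0 := by
  have hle : nilpotentSpan R (Matrix n n R) ≤ LinearMap.ker (Matrix.traceLinearMap n R R) :=
    Submodule.span_le.mpr fun _ hN ↦ (Matrix.isNilpotent_trace_of_isNilpotent hN).eq_zero
  exact hle hM

theorem matrix_eq_zero_of_mul_mem_nilpotentSpan {M : Matrix n n R}
    (hM : ∀ N, N * M ∈ nilpotentSpan R (Matrix n n R)) : M = 0 :=
  Matrix.ext_iff_trace_mul_left.mpr fun N ↦ by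
    rw [trace_eq_zero_of_mem_nilpotentSpan (hM N), mul_zero, Matrix.trace_zero]

end Matrix

section Jacobson

theorem mem_jacobson_of_forall_isNilpotent_mul {R : Type*} [Ring R] {x : R}
    (hx : ∀ y, IsNilpotent (y * x)) : x ∈ Ring.jacobson R := by
  rw [← Ideal.jacobson_bot, Ideal.mem_jacobson_iff]
  intro y
  obtain ⟨z, hz⟩ := (hx y).isUnit_add_one.exists_left_inv
  refine ⟨z, ?_⟩
  rw [Submodule.mem_bot, ← hz]
  noncomm_ring

theorem mem_jacobson_of_map_mem_jacobson {R R' : Type*} [Ring R] [Ring R'] [IsSemiprimaryRing R']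
    {f : R →+* R'} (hf : Function.Injective f) {x : R} (hx : f x ∈ Ring.jacobson R') :
    x ∈ Ring.jacobson R := by
  refine mem_jacobson_of_forall_isNilpotent_mul fun y ↦ (IsNilpotent.map_iff hf).mp ?_
  obtain ⟨n, hn⟩ := IsSemiprimaryRing.isNilpotent (R := R')
  have hmem : f (y * x) ∈ Ring.jacobson R' := by
    rw [map_mul]
    exact Ideal.mul_mem_left _ _ hx
  refine ⟨n, ?_⟩
  simpa only [hn, Submodule.zero_eq_bot, Submodule.mem_bot] using Ideal.pow_mem_pow hmem n

theorem isNilpotent_of_le_jacobson {R A : Type*} [CommSemiring R] [Ring A] [Algebra R A]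
    [IsSemiprimaryRing A] {M : Submodule R A}
    (hM : M ≤ (Ring.jacobson A).restrictScalars R) : IsNilpotent M := by
  obtain ⟨n, hn⟩ := IsSemiprimaryRing.isNilpotent (R := A)
  refine ⟨n + 1, le_bot_iff.mp ?_⟩
  calc M ^ (n + 1) ≤ (Ring.jacobson A).restrictScalars R ^ (n + 1) := pow_le_pow_left' hM _
    _ = (Ring.jacobson A ^ (n + 1)).restrictScalars R :=
      (Submodule.restrictScalars_pow n.succ_ne_zero).symm
    _ = ⊥ := by
      rw [Submodule.pow_succ, hn, Submodule.zero_eq_bot, Submodule.bot_mul,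
        Submodule.restrictScalars_bot]

end Jacobson

section FiniteDimensional

variable {F B : Type*} [Field F] [Ring B] [Algebra F B] [FiniteDimensional F B] {x : B}

theorem eq_zero_of_mul_mem_nilpotentSpan_of_isSemisimpleRing [IsAlgClosed F] [IsSemisimpleRing B]
    (hx : ∀ b, b * x ∈ nilpotentSpan F B) : x = 0 := by
  obtain ⟨_, _, -, ⟨e⟩⟩ := IsSemisimpleRing.exists_algEquiv_pi_matrix_of_isAlgClosed F B
  rw [← e.map_eq_zero_iff]
  funext i
  have hsurj : Function.Surjective ((Pi.evalAlgHom F _ i).comp e.toAlgHom) :=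
    (Function.surjective_eval i).comp e.surjective
  exact matrix_eq_zero_of_mul_mem_nilpotentSpan (mul_map_mem_nilpotentSpan_of_surjective hsurj hx)

theorem mem_jacobson_of_mul_mem_nilpotentSpan_of_isAlgClosed [IsAlgClosed F]
    (hx : ∀ b, b * x ∈ nilpotentSpan F B) : x ∈ Ring.jacobson B := by
  have : IsArtinianRing B := .of_finite F B
  let q := Ideal.Quotient.mkₐ F (Ring.jacobson B)
  have hq : Function.Surjective q := Ideal.Quotient.mkₐ_surjective F _
  have : FiniteDimensional F (B ⧸ Ring.jacobson B) := .of_surjective q.toLinearMap hq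
  rw [← Ideal.Quotient.eq_zero_iff_mem]
  exact eq_zero_of_mul_mem_nilpotentSpan_of_isSemisimpleRing
    (mul_map_mem_nilpotentSpan_of_surjective hq hx)

theorem mem_jacobson_of_mul_mem_nilpotentSpan (hx : ∀ b, b * x ∈ nilpotentSpan F B) :
    x ∈ Ring.jacobson B := by
  let K := AlgebraicClosure F
  have : IsArtinianRing (K ⊗[F] B) := .of_finite K _
  have hinj : Function.Injective (Algebra.TensorProduct.includeRight : B →ₐ[F] K ⊗[F] B) :=
    Algebra.TensorProduct.includeRight_injective (algebraMap F K).injective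
  have hmem : (1 : K) ⊗ₜ[F] x ∈ Ring.jacobson (K ⊗[F] B) :=
    mem_jacobson_of_mul_mem_nilpotentSpan_of_isAlgClosed (mul_one_tmul_mem_nilpotentSpan K hx)
  exact mem_jacobson_of_map_mem_jacobson
    (f := (Algebra.TensorProduct.includeRight : B →ₐ[F] K ⊗[F] B).toRingHom) hinj hmem

end FiniteDimensional

section NonUnitalSubalgebra

theorem mul_mem_of_mem_adjoin {R A : Type*} [CommSemiring R] [Semiring A] [Algebra R A]
    (S : NonUnitalSubalgebra R A) {b s : A} (hb : b ∈ Algebra.adjoin R (S : Set A))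
    (hs : s ∈ S) : b * s ∈ S := by
  induction hb using Algebra.adjoin_induction generalizing s with
  | mem a ha => exact mul_mem ha hs
  | algebraMap r => rw [← Algebra.smul_def]; exact SMulMemClass.smul_mem r hs
  | add a b _ _ ha hb => rw [add_mul]; exact add_mem (ha hs) (hb hs)
  | mul a b _ _ ha hb => rw [mul_assoc]; exact ha (hb hs)

theorem finite_adjoin_nonUnitalSubalgebra {R A : Type*} [CommSemiring R] [Semiring A] [Algebra R A]
    (S : NonUnitalSubalgebra R A) [Module.Finite R S] :
    Module.Finite R (Algebra.adjoin R (S : Set A)) := by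
  have : Module.Finite R (Unitization R S) :=
    .equiv (Unitization.linearEquiv R R S).symm
  rw [← NonUnitalSubalgebra.unitization_range]
  exact Module.Finite.range (NonUnitalSubalgebra.unitization S).toLinearMap

variable {F A : Type*} [Field F] [Ring A] [Algebra F A]

theorem isNilpotent_toSubmodule_of_le_span_isNilpotent (S : NonUnitalSubalgebra F A)
    [FiniteDimensional F S] (hS : S.toSubmodule ≤ Submodule.span F {x ∈ S | IsNilpotent x}) :
    IsNilpotent S.toSubmodule := by
  let B := Algebra.adjoin F (S : Set A)
  have hSB : (S : Set A) ⊆ B := Algebra.subset_adjoin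
  have : FiniteDimensional F B := finite_adjoin_nonUnitalSubalgebra S
  have : IsArtinianRing B := .of_finite F B
  have hle : S.toSubmodule ≤ (nilpotentSpan F B).map B.val.toLinearMap := by
    rw [map_val_nilpotentSpan]
    exact hS.trans (Submodule.span_mono fun _ hx ↦ ⟨hSB hx.1, hx.2⟩)
  have hnil {b : B} (hb : (b : A) ∈ S) : b ∈ nilpotentSpan F B :=
    Subtype.val_injective.mem_set_image.mp (hle hb)
  have hjac : S.toSubmodule.comap B.val.toLinearMap ≤ (Ring.jacobson B).restrictScalars F :=
    fun s hs ↦ mem_jacobson_of_mul_mem_nilpotentSpan fun b ↦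
      hnil (mul_mem_of_mem_adjoin S b.2 hs)
  have hmap : (S.toSubmodule.comap B.val.toLinearMap).map B.val.toLinearMap = S.toSubmodule :=
    Submodule.map_comap_eq_self fun s hs ↦ ⟨⟨s, hSB hs⟩, rfl⟩
  rw [← hmap]
  exact (isNilpotent_of_le_jacobson hjac).map (Submodule.mapHom B.val)

end NonUnitalSubalgebra

/-- Every spanning subset (in particular every basis) of a non-nilpotent
finite-dimensional (non-unital) subalgebra contains a non-nilpotent element. -/
theorem stmt_11 {F A : Type*} [Field F] [Ring A] [Algebra F A]
    (S : Submodule F A) (hmul : ∀ x ∈ S, ∀ y ∈ S, x * y ∈ S)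
    [FiniteDimensional F ↥S]
    (hnonnil : ∀ k : ℕ, 1 ≤ k → ∃ f : Fin k → A,
      (∀ i, f i ∈ S) ∧ (List.ofFn f).prod ≠ 0)
    (V : Set A) (hVS : V ⊆ ↑S) (hspan : Submodule.span F V = S) :
    ∃ x ∈ V, ∀ k : ℕ, 1 ≤ k → x ^ k ≠ 0 := by
  by_contra! hV
  let T : NonUnitalSubalgebra F A := { S with mul_mem' := fun ha hb ↦ hmul _ ha _ hb }
  have : FiniteDimensional F T := ‹FiniteDimensional F S›
  have hle : S ≤ Submodule.span F {x ∈ T | IsNilpotent x} := by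
    rw [← hspan]
    refine Submodule.span_mono fun x hx ↦ ⟨hVS hx, ?_⟩
    obtain ⟨k, -, hk⟩ := hV x hx
    exact ⟨k, hk⟩
  obtain ⟨n, hn⟩ : IsNilpotent S := isNilpotent_toSubmodule_of_le_span_isNilpotent T hle
  obtain ⟨f, hfS, hf⟩ := hnonnil (n + 1) n.succ_pos
  have hmem : (List.ofFn f).prod ∈ S ^ (n + 1) :=
    Submodule.pow_subset_pow S (Set.mem_pow.mpr ⟨fun i ↦ ⟨f i, hfS i⟩, rfl⟩)
  rw [pow_succ, hn, zero_mul] at hmem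
  exact hf hmem
end

section
/- Let F be a field and A a finite-dimensional unital associative F-algebra. Let J ⊆ A be a right ideal (an F-subspace with x*a ∈ J for all x ∈ J, a ∈ A) that is not nilpotent, i.e., for every k ≥ 1 there exist x₁,…,x_k ∈ J with x₁*x₂*⋯*x_k ≠ 0. Then there exists an idempotent e ∈ J (e*e = e) such that the right ideal J'' = {x − e*x : x ∈ J} is nilpotent, i.e., there exists k ≥ 1 such that every product of k elements of J'' equals 0. (Equivalently, e + Rad(A) is a left identity element of (J + Rad(A))/Rad(A).) -/
/-!
Modulo its radical, `A` is semisimple, so the image of `J` there is a right ideal generated by an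
idempotent, which is then a left identity of that image. Choose `a ∈ J` over this idempotent. Since
the radical is nil, the idempotent also lifts to an idempotent `g` of `A`, possibly outside `J`; but
`u = 1 + (a * g - g)` is a unit congruent to `1` with `u * g = a * g`, so that the conjugate
`u * g * u⁻¹ = a * (g * u⁻¹)` is an idempotent of `J` lifting the same element. Hence
`x - e * x` lies in the radical for every `x ∈ J`, and the radical is nilpotent.
-/

theorem exists_isIdempotentElem_mul_of_ker_isNilpotent {R S : Type*} [Ring R] [Ring S]
    (f : R →+* S) (hker : ∀ x ∈ RingHom.ker f, IsNilpotent x) {a : R}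
    (ha : IsIdempotentElem (f a)) : ∃ r : R, IsIdempotentElem (a * r) ∧ f (a * r) = f a := by
  obtain ⟨g, hg, hga⟩ := exists_isIdempotentElem_eq_of_ker_isNilpotent f hker (f a) ⟨a, rfl⟩ ha
  have hmem_ker : a * g - g ∈ RingHom.ker f := by simp [RingHom.mem_ker, hga, ha.eq]
  obtain ⟨u, hu⟩ : IsUnit (1 + (a * g - g)) := (hker _ hmem_ker).isUnit_one_add
  have hug : u * g = a * g := by simp [hu, add_mul, sub_mul, mul_assoc, hg.eq]
  have hfu : f u = 1 := by simp [hu, RingHom.mem_ker.mp hmem_ker]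
  have hfu_inv : f ↑u⁻¹ = 1 := by simpa [hfu] using (map_mul f ↑u ↑u⁻¹).symm
  refine ⟨g * ↑u⁻¹, ?_, ?_⟩
  · rw [← mul_assoc, ← hug]
    simp [IsIdempotentElem, mul_assoc, hg.mul_self_mul]
  · simp [hga, hfu_inv, ha.eq]

section RightIdeal

variable {R S : Type*} [Ring R] [Ring S]

theorem exists_isIdempotentElem_mul_eq_of_isSemisimpleRing [IsSemisimpleRing R]
    (I : Submodule Rᵐᵒᵖ R) : ∃ e ∈ I, IsIdempotentElem e ∧ ∀ x ∈ I, e * x = x := by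
  let I' : Ideal Rᵐᵒᵖ := I.comap (MulOpposite.opLinearEquiv Rᵐᵒᵖ).symm.toLinearMap
  obtain ⟨e, he, hI⟩ := IsSemisimpleRing.ideal_eq_span_idempotent I'
  have mem_span {x : R} : x ∈ I ↔ MulOpposite.op x ∈ Ideal.span {e} := by rw [← hI]; rfl
  refine ⟨e.unop, mem_span.mpr (Ideal.mem_span_singleton_self e),
    congrArg MulOpposite.unop he.eq, fun x hx ↦ ?_⟩
  obtain ⟨y, hy⟩ := Ideal.mem_span_singleton'.mp (mem_span.mp hx)
  have hxe : MulOpposite.op x * e = MulOpposite.op x := by rw [← hy, mul_assoc, he.eq]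
  exact congrArg MulOpposite.unop hxe

theorem exists_isIdempotentElem_map_mul_eq [IsSemisimpleRing S] {f : R →+* S}
    (hf : Function.Surjective f) (J : Submodule Rᵐᵒᵖ R) :
    ∃ a ∈ J, IsIdempotentElem (f a) ∧ ∀ x ∈ J, f a * f x = f x := by
  let K : Submodule Sᵐᵒᵖ S :=
    { J.toAddSubmonoid.map f with
      smul_mem' := by
        rintro ⟨s⟩ _ ⟨x, hx, rfl⟩
        obtain ⟨r, rfl⟩ := hf s
        exact ⟨x * r, J.smul_mem (MulOpposite.op r) hx, map_mul f x r⟩ }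
  obtain ⟨_, ⟨a, haJ, rfl⟩, ha, hleft⟩ := exists_isIdempotentElem_mul_eq_of_isSemisimpleRing K
  exact ⟨a, haJ, ha, fun x hx ↦ hleft (f x) ⟨x, hx, rfl⟩⟩

theorem exists_isIdempotentElem_sub_mul_mem_ker [IsSemisimpleRing S] {f : R →+* S}
    (hf : Function.Surjective f) (hker : ∀ x ∈ RingHom.ker f, IsNilpotent x)
    (J : Submodule Rᵐᵒᵖ R) :
    ∃ e ∈ J, IsIdempotentElem e ∧ ∀ x ∈ J, x - e * x ∈ RingHom.ker f := by
  obtain ⟨a, haJ, ha, hleft⟩ := exists_isIdempotentElem_map_mul_eq hf J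
  obtain ⟨r, hr, hfr⟩ := exists_isIdempotentElem_mul_of_ker_isNilpotent f hker ha
  refine ⟨a * r, J.smul_mem (MulOpposite.op r) haJ, hr, fun x hx ↦ ?_⟩
  rw [RingHom.mem_ker, map_sub, map_mul, hfr, hleft x hx, sub_self]

theorem exists_isIdempotentElem_sub_mul_mem_jacobson [IsSemiprimaryRing R]
    (J : Submodule Rᵐᵒᵖ R) :
    ∃ e ∈ J, IsIdempotentElem e ∧ ∀ x ∈ J, x - e * x ∈ Ring.jacobson R := by
  obtain ⟨n, hn⟩ := IsSemiprimaryRing.isNilpotent (R := R)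
  have hnil : ∀ x ∈ Ring.jacobson R, IsNilpotent x := fun x hx ↦
    ⟨n, by simpa [hn] using Ideal.pow_mem_pow hx n⟩
  simpa only [Ideal.mk_ker] using exists_isIdempotentElem_sub_mul_mem_ker
    (Ideal.Quotient.mk_surjective (I := Ring.jacobson R)) (by simpa only [Ideal.mk_ker]) J

end RightIdeal

theorem list_prod_ofFn_mem_ideal_pow {R : Type*} [Semiring R] (I : Ideal R) {k : ℕ}
    {f : Fin k → R} (hf : ∀ i, f i ∈ I) : (List.ofFn f).prod ∈ I ^ k :=
  Submodule.pow_subset_pow I (Set.mem_pow.mpr ⟨fun i ↦ ⟨f i, hf i⟩, rfl⟩)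

theorem stmt_13_general {A : Type*} [Ring A] [IsSemiprimaryRing A] (J : Submodule Aᵐᵒᵖ A) :
    ∃ e ∈ J, e * e = e ∧
      ∃ k : ℕ, 1 ≤ k ∧ ∀ f : Fin k → A,
        (∀ i, ∃ x ∈ J, f i = x - e * x) → (List.ofFn f).prod = 0 := by
  obtain ⟨e, heJ, he, hrad⟩ := exists_isIdempotentElem_sub_mul_mem_jacobson J
  obtain ⟨n, hn⟩ := IsSemiprimaryRing.isNilpotent (R := A)
  refine ⟨e, heJ, he, n + 1, n.succ_pos, fun f hf ↦ ?_⟩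
  have hf_mem (i : Fin (n + 1)) : f i ∈ Ring.jacobson A := by
    obtain ⟨x, hx, hfx⟩ := hf i
    exact hfx ▸ hrad x hx
  simpa [Submodule.pow_succ, hn] using list_prod_ofFn_mem_ideal_pow (Ring.jacobson A) hf_mem

/-- A non-nilpotent right ideal J of a finite-dimensional unital algebra
contains an idempotent e such that the right ideal {x - e*x : x ∈ J} is
nilpotent. -/
theorem stmt_13 {F A : Type*} [Field F] [Ring A] [Algebra F A]
    [FiniteDimensional F A]
    (J : Submodule F A) (hJr : ∀ x ∈ J, ∀ a : A, x * a ∈ J)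
    (hnonnil : ∀ k : ℕ, 1 ≤ k → ∃ f : Fin k → A,
      (∀ i, f i ∈ J) ∧ (List.ofFn f).prod ≠ 0) :
    ∃ e ∈ J, e * e = e ∧
      ∃ k : ℕ, 1 ≤ k ∧ ∀ f : Fin k → A,
        (∀ i, ∃ x ∈ J, f i = x - e * x) → (List.ofFn f).prod = 0 := by
  have : IsArtinianRing A := isArtinian_of_tower F inferInstance
  exact stmt_13_general { J with smul_mem' := fun a x hx ↦ hJr x hx a.unop }
end

section
/- Let F be a field with char F ≠ 2, and let A be a finite-dimensional unital associative F-algebra equipped with an F-linear involution *. Let J be a two-sided ideal of A with J* ⊆ J and J nilpotent (e.g., J = Rad(A)). Let E ∈ A be invertible with E* = E, and suppose there exists Y ∈ A such that Y**Y − E ∈ J (i.e., Y*Y ≡ E modulo J). Then there exists X ∈ A with X**X = E. -/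
/-! Write `star Y * Y = E * (1 - 2 * N)` with `N` in the ideal `J`; symmetry makes `N` self-adjoint
for the form `E`, that is, `star N * E = E * N`. Newton's iteration for the inverse square root of
`1 - 2 * N` replaces `Y` by `Y * (1 + N)`, and `(1 + N) * (1 - 2 * N) * (1 + N)` differs from `1` by
a multiple of `N ^ 2`. The new error is therefore of the same kind with half the nilpotency index,
and finitely many steps reach an exact solution. -/

theorem exists_mem_pow_eq_zero_and_two_mul_eq {A : Type*} [Ring A] {N : A} (h2 : IsUnit (2 : A))
    (J : Ideal A) {m : ℕ} (hNJ : N ∈ J) (hN : N ^ (2 * m) = 0) :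
    ∃ N' ∈ J, N' ^ m = 0 ∧ 2 * N' = N ^ 2 * (3 + 2 * N) := by
  obtain ⟨two, htwo⟩ := h2
  let c : A := ↑two⁻¹ * (3 + 2 * N)
  have hcomm : Commute c N := by
    have htwoN : Commute (two : A) N := htwo ▸ Commute.ofNat_left 2 N
    exact htwoN.units_inv_left.mul_left <|
      (Commute.ofNat_left 3 N).add_left ((Commute.ofNat_left 2 N).mul_left (.refl N))
  refine ⟨c * N ^ 2, ?_, ?_, ?_⟩
  · rw [sq, ← mul_assoc]
    exact J.mul_mem_left _ hNJ
  · rw [(hcomm.pow_right 2).mul_pow, ← pow_mul, hN, mul_zero]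
  · rw [← mul_assoc, ← htwo, Units.mul_inv_cancel_left, htwo]
    noncomm_ring

section NewtonLift

variable {A : Type*} [Ring A] [StarRing A] {E Y N : A}

theorem star_mul_eq_mul_of_isSelfAdjoint_mul_one_sub_two_mul (h2 : IsLeftRegular (2 : A))
    (hE : IsSelfAdjoint E) (hN : IsSelfAdjoint (E * (1 - 2 * N))) : star N * E = E * N := by
  have hsub : E - 2 * (star N * E) = E - 2 * (E * N) :=
    calc E - 2 * (star N * E) = star (E * (1 - 2 * N)) := by
          rw [star_mul, hE.star_eq, star_sub, star_one, star_mul, star_ofNat]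
          noncomm_ring
      _ = E - 2 * (E * N) := by
          rw [hN.star_eq]
          noncomm_ring
  exact h2 (sub_right_injective hsub)

theorem star_mul_self_mul_one_add (hEN : star N * E = E * N)
    (hY : star Y * Y = E * (1 - 2 * N)) :
    star (Y * (1 + N)) * (Y * (1 + N)) = E * (1 - N ^ 2 * (3 + 2 * N)) :=
  calc star (Y * (1 + N)) * (Y * (1 + N))
      = (1 + star N) * (star Y * Y) * (1 + N) := by
        simp only [star_mul, star_add, star_one, mul_assoc]
    _ = (E + star N * E) * ((1 - 2 * N) * (1 + N)) := by
        rw [hY]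
        noncomm_ring
    _ = E * (1 - N ^ 2 * (3 + 2 * N)) := by
        rw [hEN]
        noncomm_ring

theorem exists_star_mul_self_eq_and_sub_mem (h2 : IsUnit (2 : A))
    (hE : IsSelfAdjoint E) (J : Ideal A) (k : ℕ) (hNJ : N ∈ J) (hNk : N ^ 2 ^ k = 0)
    (hY : star Y * Y = E * (1 - 2 * N)) :
    ∃ X : A, star X * X = E ∧ X - Y ∈ J := by
  induction k generalizing Y N with
  | zero =>
    have hN : N = 0 := by simpa using hNk
    exact ⟨Y, by simpa [hN] using hY, by simp⟩
  | succ k ih =>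
    obtain ⟨N', hNJ', hNk', hN'⟩ :=
      exists_mem_pow_eq_zero_and_two_mul_eq h2 J hNJ (pow_succ' 2 k ▸ hNk)
    have hEN : star N * E = E * N :=
      star_mul_eq_mul_of_isSelfAdjoint_mul_one_sub_two_mul h2.isRegular.left hE
        (hY ▸ IsSelfAdjoint.star_mul_self Y)
    obtain ⟨X, hX, hXY⟩ := ih hNJ' hNk' (hN' ▸ star_mul_self_mul_one_add hEN hY)
    refine ⟨X, hX, ?_⟩
    have hstep : X - Y = (X - Y * (1 + N)) + Y * N := by noncomm_ring
    exact hstep ▸ J.add_mem hXY (J.mul_mem_left Y hNJ)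

theorem stmt_14_general (h2 : IsUnit (2 : A)) (J : Ideal A) (hJ : ∀ x ∈ J, IsNilpotent x)
    (hE : IsUnit E) (hEstar : IsSelfAdjoint E) (hY : star Y * Y - E ∈ J) :
    ∃ X : A, star X * X = E ∧ X - Y ∈ J := by
  obtain ⟨u, rfl⟩ := hE
  have ⟨two, htwo⟩ := h2
  let N : A := ↑two⁻¹ * (↑u⁻¹ * (u - star Y * Y))
  have hNJ : N ∈ J := J.mul_mem_left _ (J.mul_mem_left _ (sub_mem_comm_iff.mp hY))
  have hYN : star Y * Y = u * (1 - 2 * N) := by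
    rw [← htwo, Units.mul_inv_cancel_left, mul_sub, Units.mul_inv_cancel_left, mul_one,
      sub_sub_cancel]
  obtain ⟨n, hn⟩ := hJ N hNJ
  exact exists_star_mul_self_eq_and_sub_mem h2 hEstar J n hNJ
    (pow_eq_zero_of_le n.lt_two_pow_self.le hn) hYN

end NewtonLift

/-- Lifting a solution of the *-symmetric decomposition problem modulo a
nilpotent *-invariant two-sided ideal: if star Y * Y ≡ E modulo J for an
invertible *-symmetric E, then there is X with star X * X = E. -/
theorem stmt_14 {F A : Type*} [Field F] [StarRing F] [TrivialStar F]
    (h2 : (2 : F) ≠ 0)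
    [Ring A] [Algebra F A] [StarRing A] [StarModule F A]
    [FiniteDimensional F A]
    (J : Submodule F A)
    (hJl : ∀ x ∈ J, ∀ a : A, a * x ∈ J) (hJr : ∀ x ∈ J, ∀ a : A, x * a ∈ J)
    (hJstar : ∀ x ∈ J, star x ∈ J)
    (hJnil : ∃ k : ℕ, 1 ≤ k ∧ ∀ f : Fin k → A,
      (∀ i, f i ∈ J) → (List.ofFn f).prod = 0)
    (E : A) (hE : IsUnit E) (hEstar : star E = E)
    (Y : A) (hY : star Y * Y - E ∈ J) :
    ∃ X : A, star X * X = E := by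
  obtain ⟨k, -, hk⟩ := hJnil
  let I : Ideal A := { J with smul_mem' := fun a x hx ↦ hJl x hx a }
  have hI : ∀ x ∈ I, IsNilpotent x := fun x hx ↦ ⟨k, by simpa using hk (fun _ ↦ x) fun _ ↦ hx⟩
  have h2A : IsUnit (2 : A) := map_ofNat (algebraMap F A) 2 ▸ h2.isUnit.map (algebraMap F A)
  obtain ⟨X, hX, -⟩ := stmt_14_general h2A I hI hE hEstar hY
  exact ⟨X, hX⟩
end

section
/- Let R be a ring with an involution * (an involutive anti-automorphism: (xy)* = y*·x*, (x+y)* = x* + y*, (x*)* = x). Suppose e ∈ R is a central idempotent with e* = 1 − e. Then for every E ∈ R with E* = E, the element X = E*e + (1 − e) satisfies X**X = E. In particular, in a *-algebra of exchange type every *-symmetric element E admits a decomposition E = X*X. -/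
/-!
For `a`, `b` commuting with `e`, write `(a, b)` for `a * e + b * (1 - e)`. Idempotency of `e` makes
multiplication of such pairs componentwise, and `star e = 1 - e` makes
`star (a, b) = (star b, star a)`. Hence `X = (E, 1)` satisfies
`star X * X = (1, star E) * (E, 1) = (E, star E)`, which is `E` when `star E = E`.
-/

section ExchangeIdempotent

variable {R : Type*} [Ring R] {e : R}

theorem mul_add_mul_one_sub_mul_of_isIdempotentElem (he : IsIdempotentElem e) (a b : R) {c d : R}
    (hc : Commute e c) (hd : Commute e d) :
    (a * e + b * (1 - e)) * (c * e + d * (1 - e)) = a * c * e + b * d * (1 - e) := by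
  have left_component : e * (c * e + d * (1 - e)) = c * e := by
    rw [mul_add, hc.left_comm, hd.left_comm, he.eq, he.mul_one_sub_self, mul_zero, add_zero]
  have right_component : (1 - e) * (c * e + d * (1 - e)) = d * (1 - e) := by
    rw [sub_mul, one_mul, left_component, add_sub_cancel_left]
  rw [add_mul, mul_assoc a, mul_assoc b, left_component, right_component, mul_assoc, mul_assoc]

variable [StarRing R]

theorem star_mul_add_mul_one_sub (hstar : star e = 1 - e) {a b : R}
    (ha : Commute e a) (hb : Commute e b) :
    star (a * e + b * (1 - e)) = star b * e + star a * (1 - e) := by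
  have star_one_sub : star (1 - e) = e := by rw [star_sub, star_one, hstar, sub_sub_cancel]
  rw [← ha.eq, ← ((Commute.one_left b).sub_left hb).eq, star_add, star_mul, star_mul, hstar,
    star_one_sub, add_comm]

theorem star_mul_self_mul_add_one_sub (he : IsIdempotentElem e) (hstar : star e = 1 - e) {a : R}
    (ha : Commute e a) :
    star (a * e + (1 - e)) * (a * e + (1 - e)) = a * e + star a * (1 - e) := by
  have star_eq : star (a * e + (1 - e)) = 1 * e + star a * (1 - e) := by
    simpa only [one_mul, star_one] using star_mul_add_mul_one_sub hstar ha (Commute.one_right e)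
  have mul_eq : (1 * e + star a * (1 - e)) * (a * e + (1 - e)) = a * e + star a * (1 - e) := by
    simpa only [one_mul, mul_one] using
      mul_add_mul_one_sub_mul_of_isIdempotentElem he 1 (star a) ha (Commute.one_right e)
  rw [star_eq, mul_eq]

theorem stmt_15_general (he : IsIdempotentElem e) (hstar : star e = 1 - e) {E : R}
    (hcomm : Commute e E) (hE : IsSelfAdjoint E) :
    star (E * e + (1 - e)) * (E * e + (1 - e)) = E := by
  rw [star_mul_self_mul_add_one_sub he hstar hcomm, hE.star_eq, ← mul_add, add_sub_cancel,
    mul_one]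

end ExchangeIdempotent

/-- In a ring with involution, if e is a central idempotent with
star e = 1 - e (exchange type), then every *-symmetric element E admits the
decomposition E = star X * X with X = E*e + (1 - e). -/
theorem stmt_15 {R : Type*} [Ring R] [StarRing R]
    (e : R) (he : e * e = e) (hcentral : ∀ x : R, e * x = x * e)
    (hstar : star e = 1 - e)
    (E : R) (hE : star E = E) :
    star (E * e + (1 - e)) * (E * e + (1 - e)) = E :=
  stmt_15_general he hstar (hcentral E) hE
end

section
/- Let F be a field, ε ∈ {1,−1}, n a natural number. Let A ∈ GL(n,F) with Aᵀ = ε•A, and define the involution X* = A⁻¹*Xᵀ*A on M(n,F). Let E ∈ GL(n,F) satisfy E* = E, i.e., A⁻¹*Eᵀ*A = E. Then: (1) the matrix A*E satisfies (A*E)ᵀ = ε•(A*E), i.e., it is a form of the same type as A; and (2) there exists X ∈ M(n,F) with X**X = E (i.e., A⁻¹*Xᵀ*A*X = E) if and only if there exists Y ∈ GL(n,F) with Yᵀ*A*Y = A*E, i.e., if and only if the forms A and A*E are isometric. -/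
open Matrix

section AdjointMatrices

variable {R m n : Type*} [CommRing R] [Fintype m] [Fintype n] {J : Matrix n n R}

theorem transpose_mul_eq_smul_of_isSelfAdjoint {ε : R} (hJ : Jᵀ = ε • J) {E : Matrix n n R}
    (hE : J.IsSelfAdjoint E) : (J * E)ᵀ = ε • (J * E) :=
  calc (J * E)ᵀ = Eᵀ * Jᵀ := transpose_mul J E
    _ = ε • (Eᵀ * J) := by rw [hJ, Matrix.mul_smul]
    _ = ε • (J * E) := congrArg (ε • ·) hE

variable [DecidableEq n]

theorem inv_mul_transpose_mul_eq_iff_isAdjointPair (hJ : IsUnit J) {J' : Matrix m m R}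
    {X : Matrix m n R} {Z : Matrix n m R} :
    J⁻¹ * Xᵀ * J' = Z ↔ J.IsAdjointPair J' X Z := by
  let := hJ.invertible
  rw [Matrix.mul_assoc, inv_mul_eq_iff_eq_mul_of_invertible, Matrix.IsAdjointPair]

theorem inv_mul_transpose_mul_mul_eq_iff (hJ : IsUnit J) {J' : Matrix m m R}
    {X : Matrix m n R} {E : Matrix n n R} :
    J⁻¹ * Xᵀ * J' * X = E ↔ Xᵀ * J' * X = J * E := by
  let := hJ.invertible
  rw [← inv_mul_eq_iff_eq_mul_of_invertible]
  simp only [Matrix.mul_assoc]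

theorem inv_mul_transpose_mul_mul_eq_iff_isUnit_and (hJ : IsUnit J) {J' X E : Matrix n n R}
    (hE : IsUnit E) :
    J⁻¹ * Xᵀ * J' * X = E ↔ IsUnit X ∧ Xᵀ * J' * X = J * E := by
  rw [inv_mul_transpose_mul_mul_eq_iff hJ, iff_and_self]
  intro hX
  have hGram : IsUnit (Xᵀ * J' * X) := hX ▸ hJ.mul hE
  exact isUnit_of_mul_isUnit_right hGram

end AdjointMatrices

theorem stmt_16_general {R ι : Type*} [CommRing R] [Fintype ι] [DecidableEq ι] {ε : R}
    {A E : Matrix ι ι R} (hA : IsUnit A) (hAsym : Aᵀ = ε • A) (hE : IsUnit E)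
    (hEsym : A⁻¹ * Eᵀ * A = E) :
    (A * E)ᵀ = ε • (A * E) ∧
      ((∃ X : Matrix ι ι R, A⁻¹ * Xᵀ * A * X = E) ↔
        (∃ Y : Matrix ι ι R, IsUnit Y ∧ Yᵀ * A * Y = A * E)) := by
  have hEadj : A.IsSelfAdjoint E := (inv_mul_transpose_mul_eq_iff_isAdjointPair hA).mp hEsym
  exact ⟨transpose_mul_eq_smul_of_isSelfAdjoint hAsym hEadj,
    exists_congr fun _ ↦ inv_mul_transpose_mul_mul_eq_iff_isUnit_and hA hE⟩

/-- For the involution X ↦ A⁻¹XᵀA attached to an invertible ε-symmetric form A,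
a *-symmetric invertible E gives a form A*E of the same type as A, and the
*-symmetric decomposition problem for E is equivalent to the isometry problem
for the single forms A and A*E. -/
theorem stmt_16 {F : Type*} [Field F] (ε : F) (hε : ε = 1 ∨ ε = -1) (n : ℕ)
    (A : Matrix (Fin n) (Fin n) F) (hA : IsUnit A) (hAsym : Aᵀ = ε • A)
    (E : Matrix (Fin n) (Fin n) F) (hE : IsUnit E)
    (hEsym : A⁻¹ * Eᵀ * A = E) :
    (A * E)ᵀ = ε • (A * E) ∧
      ((∃ X : Matrix (Fin n) (Fin n) F, A⁻¹ * Xᵀ * A * X = E) ↔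
        (∃ Y : Matrix (Fin n) (Fin n) F, IsUnit Y ∧ Yᵀ * A * Y = A * E)) :=
  stmt_16_general hA hAsym hE hEsym
end

section
/- Let F be a field with char F ≠ 2, and let A be a finite-dimensional unital associative F-algebra equipped with an F-linear involution *. Let J be a nilpotent two-sided ideal of A with J* = J, and let S be a *-invariant unital F-subalgebra of A (S* = S) such that A = J ⊕ S as F-vector spaces (a *-invariant Wedderburn–Malcev complement). Let a' ∈ A be invertible with a'* = a'. Then there exists u ∈ A with u − 1 ∈ J such that u**a'*u ∈ S. -/
/-!
Write `a' = j + s` with `j ∈ J` and `s ∈ S`; averaging with the adjoint makes `s` self-adjoint.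
Then `a'⁻¹ s` is unipotent, and since `2` is invertible it has a unique unipotent square root `u`,
obtained by Newton's method in the commutative algebra that `a'⁻¹ s` generates. But `a'⁻¹ u* a'` is
another such square root, so `u* a' = a' u` and `u* a' u = a' u² = s`.
-/

section SquareRoot

theorem exists_one_add_mul_sq_eq_one_add {B : Type*} [CommRing B] (h2 : IsUnit (2 : B)) {n : B}
    (hn : IsNilpotent n) : ∃ r, (1 + n * r) ^ 2 = 1 + n := by
  obtain ⟨half, hhalf⟩ := h2.exists_right_inv
  -- Cancelling `n` in `(1 + n * r) ^ 2 = 1 + n` leaves `P(r) = 0`, with approximate root `1 / 2`.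
  let P : Polynomial B := .C n * .X ^ 2 + .C 2 * .X - 1
  have hP (x : B) : P.aeval x = n * x ^ 2 + 2 * x - 1 := by simp [P]
  have hP_half : IsNilpotent (P.aeval half) := by
    rw [hP, hhalf, add_sub_cancel_right]
    exact (Commute.all _ _).isNilpotent_mul_right hn
  have hP'_half : IsUnit (P.derivative.aeval half) := by
    have hP' : P.derivative.aeval half = n * (2 * half) + 2 := by
      simp [P, one_add_one_eq_two]
    rw [hP', hhalf, mul_one]
    exact hn.isUnit_add_right_of_commute h2 (Commute.all _ _)
  obtain ⟨r, ⟨-, hr⟩, -⟩ := Polynomial.existsUnique_nilpotent_sub_and_aeval_eq_zero hP_half hP'_half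
  rw [hP] at hr
  exact ⟨r, by linear_combination n * hr⟩

variable {R A : Type*} [CommRing R] [Ring A] [Algebra R A]

theorem exists_mem_adjoin_one_add_mul_sq_eq_one_add (h2 : IsUnit (2 : R)) {n : A}
    (hn : IsNilpotent n) : ∃ r ∈ Algebra.adjoin R {n}, (1 + n * r) ^ 2 = 1 + n := by
  let n' : Algebra.adjoin R {n} := ⟨n, Algebra.self_mem_adjoin_singleton R n⟩
  have hn' : IsNilpotent n' :=
    (IsNilpotent.map_iff (f := (Algebra.adjoin R {n}).val) Subtype.val_injective).mp hn
  have h2' : IsUnit (2 : Algebra.adjoin R {n}) := by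
    simpa only [map_ofNat] using h2.map (algebraMap R (Algebra.adjoin R {n}))
  obtain ⟨r, hr⟩ := exists_one_add_mul_sq_eq_one_add h2' hn'
  exact ⟨r, r.2, congrArg Subtype.val hr⟩

theorem eq_of_commute_of_sq_eq_sq_of_isNilpotent_sub_one (h2 : IsUnit (2 : A)) {x y : A}
    (hxy : Commute x y) (hx : IsNilpotent (x - 1)) (hy : IsNilpotent (y - 1))
    (hsq : x ^ 2 = y ^ 2) : x = y := by
  have hcomm : Commute (x - 1) (y - 1) := (hxy.sub_right (.one_right x)).sub_left (.one_left _)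
  have hadd_eq : x - 1 + (y - 1) + 2 = x + y := by
    rw [← one_add_one_eq_two]
    abel
  have hadd : IsUnit (x + y) :=
    hadd_eq ▸ (hcomm.isNilpotent_add hx hy).isUnit_add_right_of_commute h2 (.ofNat_right _ 2)
  rw [← sub_eq_zero, ← hadd.mul_right_eq_zero, ← hxy.sq_sub_sq, hsq, sub_self]

theorem isNilpotent_sq_sub_one {x : A} (hx : IsNilpotent (x - 1)) : IsNilpotent (x ^ 2 - 1) := by
  rw [← one_pow 2, (Commute.one_right x).sq_sub_sq]
  exact Commute.isNilpotent_mul_left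
    (((Commute.refl x).sub_right (.one_right x)).add_left (.one_left _)) hx

theorem eq_of_sq_eq_sq_of_isNilpotent_sub_one (h2 : IsUnit (2 : R)) {x y : A}
    (hx : IsNilpotent (x - 1)) (hy : IsNilpotent (y - 1)) (hsq : x ^ 2 = y ^ 2) : x = y := by
  have h2A : IsUnit (2 : A) := by simpa only [map_ofNat] using h2.map (algebraMap R A)
  have hn := isNilpotent_sq_sub_one hx
  obtain ⟨r, hr, hw⟩ := exists_mem_adjoin_one_add_mul_sq_eq_one_add h2 hn
  set w := 1 + (x ^ 2 - 1) * r with hw_def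
  rw [add_sub_cancel] at hw
  have hw_nil : IsNilpotent (w - 1) := by
    rw [hw_def, add_sub_cancel_left]
    exact (Algebra.commute_of_mem_adjoin_self hr).isNilpotent_mul_right hn
  have hw_comm {z : A} (hz : z ^ 2 = x ^ 2) : Commute z w := by
    have hzn : Commute z (x ^ 2 - 1) := hz ▸ ((Commute.refl z).pow_right 2).sub_right (.one_right z)
    exact (Commute.one_right z).add_right
      (hzn.mul_right (Algebra.commute_of_mem_adjoin_singleton_of_commute hr hzn))
  have eq_w {z : A} (hz_nil : IsNilpotent (z - 1)) (hz : z ^ 2 = x ^ 2) : z = w :=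
    eq_of_commute_of_sq_eq_sq_of_isNilpotent_sub_one h2A (hw_comm hz) hz_nil hw_nil
      (hz.trans hw.symm)
  rw [eq_w hx rfl, eq_w hy hsq.symm]

end SquareRoot

section Congruence

variable {R A : Type*} [CommRing R] [Ring A] [Algebra R A] [StarRing A]

theorem isNilpotent_inv_mul_star_mul {x : A} (a : Aˣ) (hx : IsNilpotent x) :
    IsNilpotent (↑a⁻¹ * star x * a) := by
  obtain ⟨k, hk⟩ := hx
  exact ⟨k, by rw [Units.conj_pow', ← star_pow, hk, star_zero, mul_zero, zero_mul]⟩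

theorem exists_sub_one_mem_span_star_mul_mul_eq (h2 : IsUnit (2 : R)) {a : Aˣ} {s : A}
    (ha : IsSelfAdjoint (a : A)) (hs : IsSelfAdjoint s) (hn : IsNilpotent (↑a⁻¹ * (s - a))) :
    ∃ u : A, u - 1 ∈ Ideal.span {s - ↑a} ∧ star u * a * u = s := by
  obtain ⟨r, hr, hu_sq⟩ := exists_mem_adjoin_one_add_mul_sq_eq_one_add h2 hn
  have hcomm := Algebra.commute_of_mem_adjoin_self hr
  set u := 1 + ↑a⁻¹ * (s - a) * r with hu
  have hu_sub : u - 1 = r * (↑a⁻¹ * (s - a)) := by rw [hu, add_sub_cancel_left, hcomm.eq]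
  have hu_nil : IsNilpotent (u - 1) := hu_sub ▸ hcomm.symm.isNilpotent_mul_left hn
  replace hu_sq : a * u ^ 2 = s := by
    rw [hu_sq, mul_add, mul_one, Units.mul_inv_cancel_left, add_sub_cancel]
  have hconj_nil : IsNilpotent (↑a⁻¹ * star u * a - 1) := by
    simpa [mul_sub, sub_mul] using isNilpotent_inv_mul_star_mul a hu_nil
  have hconj_sq : (↑a⁻¹ * star u * a) ^ 2 = u ^ 2 := by
    have hstar : star (u ^ 2) * a = a * u ^ 2 := by
      rw [hu_sq, ← hs.star_eq, ← hu_sq, star_mul, ha.star_eq]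
    rw [Units.conj_pow', ← star_pow, mul_assoc, hstar, Units.inv_mul_cancel_left]
  have hconj : ↑a⁻¹ * star u * a = u :=
    eq_of_sq_eq_sq_of_isNilpotent_sub_one h2 hconj_nil hu_nil hconj_sq
  refine ⟨u, Ideal.mem_span_singleton'.mpr ⟨r * ↑a⁻¹, by rw [hu_sub, mul_assoc]⟩, ?_⟩
  calc
    star u * a * u = a * (↑a⁻¹ * star u * a) * u := by
      simp only [mul_assoc, Units.mul_inv_cancel_left]
    _ = a * u ^ 2 := by rw [hconj, mul_assoc, sq]
    _ = s := hu_sq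

end Congruence

theorem star_invOf_two_smul {R M : Type*} [Semiring R] [AddCommMonoid M] [Module R M]
    [StarAddMonoid M] [Invertible (2 : R)] (x : M) : star ((⅟2 : R) • x) = (⅟2 : R) • star x := by
  rw [eq_comm, invOf_smul_eq_iff, two_smul, ← star_add, ← two_smul R, smul_invOf_smul]

theorem exists_isSelfAdjoint_mem_sub_mem_of_mem_sup {R M : Type*} [Ring R] [AddCommGroup M]
    [Module R M] [StarAddMonoid M] (h2 : IsUnit (2 : R)) {J S : Submodule R M}
    (hJ : ∀ x ∈ J, star x ∈ J) (hS : ∀ x ∈ S, star x ∈ S) {a : M} (ha : IsSelfAdjoint a)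
    (haJS : a ∈ J ⊔ S) : ∃ s ∈ S, IsSelfAdjoint s ∧ s - a ∈ J := by
  have := h2.invertible
  obtain ⟨j, hj, s, hs, rfl⟩ := Submodule.mem_sup.mp haJS
  refine ⟨(⅟2 : R) • (s + star s), S.smul_mem _ (S.add_mem hs (hS s hs)), ?_, ?_⟩
  · rw [IsSelfAdjoint, star_invOf_two_smul, (IsSelfAdjoint.add_star_self s).star_eq]
  · have havg : j + s = (⅟2 : R) • (j + s + (star j + star s)) := by
      rw [← star_add, ha.star_eq, ← two_smul R, invOf_smul_smul]
    rw [havg, ← smul_sub, show s + star s - (j + s + (star j + star s)) = -(j + star j) by abel]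
    exact J.smul_mem _ (J.neg_mem (J.add_mem hj (hJ j hj)))

theorem stmt_17_general {R A : Type*} [CommRing R] [Ring A] [Algebra R A] [StarRing A]
    (h2 : IsUnit (2 : R)) {J S : Submodule R A} (hJmul : ∀ x ∈ J, ∀ a : A, a * x ∈ J)
    (hJstar : ∀ x ∈ J, star x ∈ J) (hJnil : ∀ x ∈ J, IsNilpotent x)
    (hSstar : ∀ x ∈ S, star x ∈ S) (hJS : Codisjoint J S) {a : A} (ha : IsUnit a)
    (hastar : IsSelfAdjoint a) : ∃ u : A, u - 1 ∈ J ∧ star u * a * u ∈ S := by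
  obtain ⟨a, rfl⟩ := ha
  obtain ⟨s, hsS, hs, hsub⟩ := exists_isSelfAdjoint_mem_sub_mem_of_mem_sup h2 hJstar hSstar hastar
    (hJS.eq_top ▸ Submodule.mem_top)
  obtain ⟨u, hu, rfl⟩ := exists_sub_one_mem_span_star_mul_mul_eq h2 hastar hs
    (hJnil _ (hJmul _ hsub _))
  obtain ⟨c, hc⟩ := Ideal.mem_span_singleton'.mp hu
  exact ⟨u, hc ▸ hJmul _ hsub c, hsS⟩

/-- Given a *-invariant Wedderburn–Malcev (Taft) decomposition A = J ⊕ S with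
J a nilpotent *-invariant two-sided ideal and S a *-invariant unital
subalgebra, every invertible *-symmetric a' can be moved into S by a
congruence u* a' u with u ∈ 1 + J. -/
theorem stmt_17 {F A : Type*} [Field F] [StarRing F] [TrivialStar F]
    (h2 : (2 : F) ≠ 0)
    [Ring A] [Algebra F A] [StarRing A] [StarModule F A]
    [FiniteDimensional F A]
    (J : Submodule F A)
    (hJl : ∀ x ∈ J, ∀ a : A, a * x ∈ J) (hJr : ∀ x ∈ J, ∀ a : A, x * a ∈ J)
    (hJstar : ∀ x ∈ J, star x ∈ J)
    (hJnil : ∃ k : ℕ, 1 ≤ k ∧ ∀ f : Fin k → A,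
      (∀ i, f i ∈ J) → (List.ofFn f).prod = 0)
    (S : Subalgebra F A) (hSstar : ∀ x ∈ S, star x ∈ S)
    (hcompl : IsCompl J (Subalgebra.toSubmodule S))
    (a' : A) (ha'unit : IsUnit a') (ha'star : star a' = a') :
    ∃ u : A, u - 1 ∈ J ∧ star u * a' * u ∈ S := by
  obtain ⟨k, -, hk⟩ := hJnil
  exact stmt_17_general h2.isUnit hJl hJstar
    (fun x hx ↦ ⟨k, by simpa using hk (fun _ ↦ x) fun _ ↦ hx⟩)
    hSstar hcompl.codisjoint ha'unit ha'star
end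

section
/- Let F be a field, ε ∈ {1,−1}, and let B₁,…,B_m, C₁,…,C_m ∈ M(n,F) satisfy B_iᵀ = ε•B_i and C_iᵀ = ε•C_i. Suppose S, T ∈ GL(n,F), k + d = n, and B'₁,…,B'_m, C'₁,…,C'_m ∈ M(k,F) are such that Sᵀ*B_i*S = [[B'_i, 0],[0, 0]] and Tᵀ*C_i*T = [[C'_i, 0],[0, 0]] (block matrices with blocks of sizes k and d) for all i, where ⋂_i ker(B'_i) = 0 and ⋂_i ker(C'_i) = 0 (the extracted tuples are non-degenerate). Then there exists U ∈ GL(n,F) with Uᵀ*B_i*U = C_i for all i, if and only if there exists V ∈ GL(k,F) with Vᵀ*B'_i*V = C'_i for all i. -/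
open Matrix

/-!
If `Uᵀ * B i * U = C i` for all `i`, with `U` invertible, then `U` maps the common kernel of `C`
onto that of `B`. When both tuples are padded by zeros, the padding coordinates lie in the common
kernel of `C`; when moreover the unpadded part of `B` is non-degenerate, they span the common
kernel of `B`. So `U` preserves their span, that is, `U` is block lower triangular, and its upper
left block is an isometry between the unpadded tuples.
-/

/-- Isometry of tuples of bilinear forms given by their Gram matrices: one invertible change of
basis transforms all the forms simultaneously. -/
def IsometricTuples {R ι n : Type*} [CommRing R] [Fintype n] [DecidableEq n]
    (B C : ι → Matrix n n R) : Prop :=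
  ∃ U : Matrix n n R, IsUnit U ∧ ∀ i, Uᵀ * B i * U = C i

/-- Non-degeneracy of a tuple of square matrices: the common (right) kernel is trivial. -/
def NondegenerateTuple {R ι n : Type*} [CommRing R] [Fintype n] (B : ι → Matrix n n R) : Prop :=
  ⨅ i, LinearMap.ker (B i).mulVecLin = ⊥

section

variable {R ι n o : Type*} [CommRing R] [Fintype n]

theorem NondegenerateTuple.eq_zero_of_forall_mul_eq_zero {B : ι → Matrix n n R}
    (hB : NondegenerateTuple B) {Q : Matrix n o R} (hQ : ∀ i, B i * Q = 0) : Q = 0 := by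
  ext a j
  have hcol : Q.col j ∈ ⨅ i, LinearMap.ker (B i).mulVecLin :=
    (Submodule.mem_iInf _).2 fun i => funext fun b => congr_fun₂ (hQ i) b j
  rw [hB, Submodule.mem_bot] at hcol
  exact congr_fun hcol a

variable [DecidableEq n] {B C D : ι → Matrix n n R}

theorem IsometricTuples.symm (h : IsometricTuples B C) : IsometricTuples C B := by
  obtain ⟨U, hU, hUB⟩ := h
  have hUinv : U * U⁻¹ = 1 := mul_nonsing_inv U ((isUnit_iff_isUnit_det U).1 hU)
  refine ⟨U⁻¹, isUnit_nonsing_inv_iff.2 hU, fun i => ?_⟩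
  calc U⁻¹ᵀ * C i * U⁻¹ = (U * U⁻¹)ᵀ * B i * (U * U⁻¹) := by
        simp only [← hUB, transpose_mul, Matrix.mul_assoc]
    _ = B i := by rw [hUinv, transpose_one, Matrix.one_mul, Matrix.mul_one]

theorem IsometricTuples.trans (hBC : IsometricTuples B C) (hCD : IsometricTuples C D) :
    IsometricTuples B D := by
  obtain ⟨U, hU, hUB⟩ := hBC
  obtain ⟨V, hV, hVC⟩ := hCD
  refine ⟨U * V, hU.mul hV, fun i => ?_⟩
  simp only [← hVC, ← hUB, transpose_mul, Matrix.mul_assoc]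

variable [Fintype o] [DecidableEq o]

theorem NondegenerateTuple.toBlocks₁₂_eq_zero (hB : NondegenerateTuple B)
    {W : Matrix (n ⊕ o) (n ⊕ o) R} (hW : IsUnit W)
    (hWB : ∀ i, Wᵀ * fromBlocks (B i) 0 0 0 * W = fromBlocks (C i) 0 0 0) :
    W.toBlocks₁₂ = 0 := by
  refine hB.eq_zero_of_forall_mul_eq_zero fun i => ?_
  have hdet : IsUnit Wᵀ.det := (isUnit_iff_isUnit_det Wᵀ).1 ((isUnit_transpose W).2 hW)
  calc B i * W.toBlocks₁₂ = (fromBlocks (B i) 0 0 0 * W).toBlocks₁₂ := by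
        ext; simp [mul_apply, toBlocks₁₂]
    _ = (Wᵀ⁻¹ * fromBlocks (C i) 0 0 0).toBlocks₁₂ := by
        rw [← hWB i, Matrix.mul_assoc, nonsing_inv_mul_cancel_left _ _ hdet]
    _ = 0 := by
        ext; simp [mul_apply, toBlocks₁₂]

theorem isometricTuples_fromBlocks_zero_iff (hB : NondegenerateTuple B) :
    IsometricTuples (fun i => fromBlocks (B i) 0 0 (0 : Matrix o o R))
      (fun i => fromBlocks (C i) 0 0 0) ↔ IsometricTuples B C := by
  constructor
  · rintro ⟨W, hW, hWB⟩
    have hW₁₂ : W.toBlocks₁₂ = 0 := hB.toBlocks₁₂_eq_zero hW hWB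
    rw [← fromBlocks_toBlocks W, hW₁₂] at hW hWB
    refine ⟨W.toBlocks₁₁, (isUnit_fromBlocks_zero₁₂.1 hW).1, fun i => ?_⟩
    simpa [fromBlocks_transpose, fromBlocks_multiply] using hWB i
  · rintro ⟨V, hV, hVB⟩
    refine ⟨fromBlocks V 0 0 1, isUnit_fromBlocks_zero₁₂.2 ⟨hV, isUnit_one⟩, fun i => ?_⟩
    simp [fromBlocks_transpose, fromBlocks_multiply, hVB]

end

theorem stmt_18_general {R ι n o : Type*} [CommRing R] [Fintype n] [DecidableEq n] [Fintype o]
    [DecidableEq o] {B C : ι → Matrix (n ⊕ o) (n ⊕ o) R} {B' C' : ι → Matrix n n R}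
    (hB : IsometricTuples B fun i => fromBlocks (B' i) 0 0 0)
    (hC : IsometricTuples C fun i => fromBlocks (C' i) 0 0 0)
    (hB' : NondegenerateTuple B') :
    IsometricTuples B C ↔ IsometricTuples B' C' := by
  rw [← isometricTuples_fromBlocks_zero_iff (o := o) hB']
  exact ⟨fun h => hB.symm.trans (h.trans hC), fun h => hB.trans (h.trans hC.symm)⟩

/-- Reduction of the isometry problem for ε-symmetric tuples to the
non-degenerate parts: B and C (of size n = k + d) are isometric iff the
extracted non-degenerate tuples B' and C' (of size k) are isometric. -/
theorem stmt_18 {F : Type*} [Field F] (ε : F) (hε : ε = 1 ∨ ε = -1)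
    (k d m : ℕ)
    (B C : Fin m → Matrix (Fin k ⊕ Fin d) (Fin k ⊕ Fin d) F)
    (hB : ∀ i, (B i)ᵀ = ε • B i) (hC : ∀ i, (C i)ᵀ = ε • C i)
    (S T : Matrix (Fin k ⊕ Fin d) (Fin k ⊕ Fin d) F)
    (hS : IsUnit S) (hT : IsUnit T)
    (B' C' : Fin m → Matrix (Fin k) (Fin k) F)
    (hSB : ∀ i, Sᵀ * B i * S = Matrix.fromBlocks (B' i) 0 0 0)
    (hTC : ∀ i, Tᵀ * C i * T = Matrix.fromBlocks (C' i) 0 0 0)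
    (hB' : ⨅ i, LinearMap.ker (B' i).mulVecLin = ⊥)
    (hC' : ⨅ i, LinearMap.ker (C' i).mulVecLin = ⊥) :
    (∃ U : Matrix (Fin k ⊕ Fin d) (Fin k ⊕ Fin d) F, IsUnit U ∧
        ∀ i, Uᵀ * B i * U = C i) ↔
      (∃ V : Matrix (Fin k) (Fin k) F, IsUnit V ∧
        ∀ i, Vᵀ * B' i * V = C' i) :=
  stmt_18_general ⟨S, hS, hSB⟩ ⟨T, hT, hTC⟩ hB'
end

section
/- Let F be a field with char F ≠ 2, ε ∈ {1,−1}, n ≥ 1, and let B₁,…,B_m ∈ M(n,F) satisfy B_iᵀ = ε•B_i and ⋂_i ker(B_i) = 0 (the tuple is non-degenerate). Let L = {Z ∈ M(n,F) : Z*B_i = B_i*Zᵀ for all i} (equivalently, Z ∈ L iff Z*B_i is ε-symmetric for all i). Then L cannot be spanned by nilpotent elements: the F-linear span of {Z ∈ L : Z is nilpotent} is a proper subspace of L. -/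
open Matrix

/-!
Write `L` for the space of the theorem. The adjoint algebra `A = {(Z, Y) | Z * B i = B i * Y}` has
the involution `(Z, Y) ↦ (Yᵀ, Zᵀ)`, and `Z ↦ (Z, Zᵀ)` identifies `L` with its symmetric elements.
So it suffices to find `a` in a nonzero finite-dimensional algebra `A` with an anti-automorphism
`s` such that `a + s a` is not a sum of nilpotents.

Over the algebraic closure `K`, the algebra `K ⊗ A` has an irreducible matrix representation `π`,
and `tr ∘ π` kills every nilpotent. If it also killed every `x + s x`, then the irreducible
representations `π` and `x ↦ π (s x)ᵀ` would have opposite traces. As the trace form of a matrix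
algebra is non-degenerate, they would have the same kernel, hence differ by an automorphism of the
matrix algebra and have the same trace. Then `2 * tr (π x) = 0` for all `x`, which is absurd.
By linearity some `x = c ⊗ a` has `tr (π (x + s x)) ≠ 0`, and `a` is as required.
-/

section MatrixRepresentations

theorem exists_algHom_matrix_surjective (K A : Type*) [Field K] [IsAlgClosed K] [Ring A]
    [Algebra K A] [FiniteDimensional K A] [Nontrivial A] :
    ∃ (d : ℕ) (_ : NeZero d) (π : A →ₐ[K] Matrix (Fin d) (Fin d) K), Function.Surjective π := by
  have : IsArtinianRing A := .of_finite K A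
  obtain ⟨r, d, hd, ⟨e⟩⟩ :=
    IsSemisimpleRing.exists_algEquiv_pi_matrix_of_isAlgClosed K (A ⧸ Ring.jacobson A)
  have : Nontrivial (A ⧸ Ring.jacobson A) :=
    Ideal.Quotient.nontrivial_iff.mpr (Ring.jacobson_lt_top A).ne
  obtain ⟨i⟩ : Nonempty (Fin r) := by
    by_contra! _
    exact not_subsingleton _ e.toEquiv.subsingleton
  exact ⟨d i, hd i, ((Pi.evalAlgHom K _ i).comp e.toAlgHom).comp
    (Ideal.Quotient.mkₐ K (Ring.jacobson A)),
    ((Function.surjective_eval i).comp e.surjective).comp (Ideal.Quotient.mkₐ_surjective K _)⟩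

theorem exists_algHom_comp_eq_of_ker_le {R A B C : Type*} [CommRing R] [Ring A] [Ring B] [Ring C]
    [Algebra R A] [Algebra R B] [Algebra R C] {f : A →ₐ[R] B} (hf : Function.Surjective f)
    {g : A →ₐ[R] C} (hker : RingHom.ker f ≤ RingHom.ker g) :
    ∃ h : B →ₐ[R] C, h.comp f = g := by
  let h := (f : A →+* B).liftOfSurjective hf ⟨(g : A →+* C), hker⟩
  have h_apply (a : A) : h (f a) = g a :=
    (f : A →+* B).liftOfSurjective_comp_apply hf ⟨(g : A →+* C), hker⟩ a
  exact ⟨{ h with commutes' r := by simpa using h_apply (algebraMap R A r) }, AlgHom.ext h_apply⟩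

variable {K A n : Type*} [Field K] [Ring A] [Algebra K A] [Fintype n] [DecidableEq n]

theorem trace_apply_eq_of_ker_le {π π' : A →ₐ[K] Matrix n n K} (hπ : Function.Surjective π)
    (hker : RingHom.ker π ≤ RingHom.ker π') (x : A) : (π' x).trace = (π x).trace := by
  obtain ⟨f, rfl⟩ := exists_algHom_comp_eq_of_ker_le hπ hker
  exact trace_map' f (π x)

theorem exists_trace_add_trace_ne_zero [Nonempty n] (h2 : (2 : K) ≠ 0)
    {π π' : A →ₐ[K] Matrix n n K} (hπ : Function.Surjective π) (hπ' : Function.Surjective π') :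
    ∃ x, (π x).trace + (π' x).trace ≠ 0 := by
  by_contra! htrace
  have hker : RingHom.ker π ≤ RingHom.ker π' := fun a (ha : π a = 0) =>
    ext_iff_trace_mul_left.mpr <| hπ'.forall.mpr fun u => by
      simpa [ha] using htrace (u * a)
  obtain ⟨x, hx : (π x).trace = 1⟩ := (trace_surjective.comp hπ) 1
  have htwo := htrace x
  rw [trace_apply_eq_of_ker_le hπ hker, hx, one_add_one_eq_two] at htwo
  exact h2 htwo

end MatrixRepresentations

section AntiAutomorphism

open scoped TensorProduct

theorem exists_trace_add_unop_ne_zero {K A : Type*} [Field K] [IsAlgClosed K] (h2 : (2 : K) ≠ 0)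
    [Ring A] [Algebra K A] [FiniteDimensional K A] [Nontrivial A] (s : A ≃ₐ[K] Aᵐᵒᵖ) :
    ∃ (d : ℕ) (π : A →ₐ[K] Matrix (Fin d) (Fin d) K) (a : A),
      (π (a + (s a).unop)).trace ≠ 0 := by
  obtain ⟨d, _, π, hπ⟩ := exists_algHom_matrix_surjective K A
  let π' : A →ₐ[K] Matrix (Fin d) (Fin d) K :=
    ((transposeAlgEquiv (Fin d) K K).symm.toAlgHom.comp (AlgHom.op π)).comp s.toAlgHom
  have π'_apply (a : A) : π' a = (π (s a).unop)ᵀ := rfl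
  have hπ' : Function.Surjective π' := fun M => by
    obtain ⟨a, ha⟩ := hπ Mᵀ
    exact ⟨s.symm (.op a), by simp [π'_apply, ha]⟩
  obtain ⟨a, ha⟩ := exists_trace_add_trace_ne_zero h2 hπ hπ'
  exact ⟨d, π, a, by simpa [π'_apply] using ha⟩

/-- The `K`-linear extension of an anti-automorphism of an `F`-algebra `A` to `K ⊗[F] A`. -/
noncomputable def baseChangeOp {F A : Type*} (K : Type*) [CommRing F] [CommRing K] [Algebra F K]
    [Ring A] [Algebra F A] (s : A ≃ₐ[F] Aᵐᵒᵖ) : K ⊗[F] A ≃ₐ[K] (K ⊗[F] A)ᵐᵒᵖ :=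
  (Algebra.TensorProduct.congr (AlgEquiv.toOpposite K K) s).trans
    (Algebra.TensorProduct.opAlgEquiv F K K A)

theorem unop_baseChangeOp_tmul {F K A : Type*} [CommRing F] [CommRing K] [Algebra F K]
    [Ring A] [Algebra F A] (s : A ≃ₐ[F] Aᵐᵒᵖ) (c : K) (a : A) :
    (baseChangeOp K s (c ⊗ₜ a)).unop = c ⊗ₜ (s a).unop := by
  simp [baseChangeOp]

theorem trace_tmul_eq_zero_of_mem_span_isNilpotent {F K A n : Type*} [CommRing F] [CommRing K]
    [IsReduced K] [Algebra F K] [Ring A] [Algebra F A] [Fintype n] [DecidableEq n]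
    (π : K ⊗[F] A →ₐ[K] Matrix n n K) (c : K) {a : A}
    (ha : a ∈ Submodule.span F {x : A | IsNilpotent x}) : (π (c ⊗ₜ a)).trace = 0 := by
  induction ha using Submodule.span_induction with
  | mem a ha =>
    have hca : IsNilpotent (c ⊗ₜ[F] a) := by
      obtain ⟨k, hk⟩ := ha
      exact ⟨k, by rw [Algebra.TensorProduct.tmul_pow, hk, TensorProduct.tmul_zero]⟩
    exact (isNilpotent_trace_of_isNilpotent (hca.map π)).eq_zero
  | zero => simp
  | add a b _ _ ha hb => rw [TensorProduct.tmul_add, map_add, trace_add, ha, hb, add_zero]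
  | smul r a _ ha =>
    rw [TensorProduct.tmul_smul, ← algebraMap_smul K r (c ⊗ₜ[F] a), map_smul, trace_smul, ha,
      smul_zero]

theorem exists_add_unop_notMem_span_isNilpotent {F A : Type*} [Field F] (h2 : (2 : F) ≠ 0)
    [Ring A] [Algebra F A] [FiniteDimensional F A] [Nontrivial A] (s : A ≃ₐ[F] Aᵐᵒᵖ) :
    ∃ a, a + (s a).unop ∉ Submodule.span F {x : A | IsNilpotent x} := by
  let K := AlgebraicClosure F
  have h2K : (2 : K) ≠ 0 := by
    rw [← map_ofNat (algebraMap F K) 2]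
    exact (map_ne_zero _).mpr h2
  obtain ⟨d, π, x, hx⟩ := exists_trace_add_unop_ne_zero h2K (baseChangeOp K s)
  by_contra! hspan
  have trace_eq_zero (y : K ⊗[F] A) : (π (y + (baseChangeOp K s y).unop)).trace = 0 := by
    induction y with
    | zero => simp
    | tmul c a =>
      rw [unop_baseChangeOp_tmul, ← TensorProduct.tmul_add]
      exact trace_tmul_eq_zero_of_mem_span_isNilpotent π c (hspan a)
    | add y z hy hz =>
      rw [map_add (baseChangeOp K s), MulOpposite.unop_add, add_add_add_comm, map_add π,
        trace_add, hy, hz, add_zero]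
  exact hx (trace_eq_zero x)

end AntiAutomorphism

section AdjointAlgebra

variable {ι n R : Type*} [CommRing R] [Fintype n] [DecidableEq n]

/-- The adjoint algebra of a tuple of matrices, as the algebra of pairs `(Z, Y)` with
`Z * B i = B i * Y` for all `i`. Keeping both entries makes the involution `(Z, Y) ↦ (Yᵀ, Zᵀ)`
well defined also when `Z` does not determine `Y`. -/
def adjointAlgebra (B : ι → Matrix n n R) : Subalgebra R (Matrix n n R × Matrix n n R) where
  carrier := {p | ∀ i, p.1 * B i = B i * p.2}
  mul_mem' {p q} hp hq i := by
    rw [Prod.fst_mul, Prod.snd_mul, Matrix.mul_assoc, hq i, ← Matrix.mul_assoc, hp i,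
      Matrix.mul_assoc]
  add_mem' {p q} hp hq i := by
    rw [Prod.fst_add, Prod.snd_add, Matrix.add_mul, hp i, hq i, Matrix.mul_add]
  algebraMap_mem' r i := by
    simp [Algebra.algebraMap_eq_smul_one]

variable {B : ι → Matrix n n R} {ε : ι → R}

theorem transpose_swap_mem_adjointAlgebra (hB : ∀ i, (B i)ᵀ = ε i • B i)
    {p : Matrix n n R × Matrix n n R} (hp : p ∈ adjointAlgebra B) :
    (p.2ᵀ, p.1ᵀ) ∈ adjointAlgebra B := fun i => by
  have hB' : B i = ε i • (B i)ᵀ := by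
    simpa using congrArg transpose (hB i)
  calc p.2ᵀ * B i = ε i • (B i * p.2)ᵀ := by rw [transpose_mul, ← Matrix.mul_smul, ← hB']
    _ = ε i • (p.1 * B i)ᵀ := by rw [hp i]
    _ = B i * p.1ᵀ := by rw [transpose_mul, ← Matrix.smul_mul, ← hB']

/-- The involution `(Z, Y) ↦ (Yᵀ, Zᵀ)` of the adjoint algebra of a tuple of matrices
each proportional to its transpose, as an isomorphism with the opposite algebra. -/
def adjointInvolution (hB : ∀ i, (B i)ᵀ = ε i • B i) :
    adjointAlgebra B ≃ₐ[R] (adjointAlgebra B)ᵐᵒᵖ where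
  toFun p := .op ⟨_, transpose_swap_mem_adjointAlgebra hB p.2⟩
  invFun p := ⟨_, transpose_swap_mem_adjointAlgebra hB p.unop.2⟩
  left_inv _ := rfl
  right_inv _ := rfl
  map_mul' p q := MulOpposite.unop_injective <| Subtype.ext <| by simp
  map_add' p q := MulOpposite.unop_injective <| Subtype.ext <| by simp
  commutes' r := MulOpposite.unop_injective <| Subtype.ext <| by
    simp [Algebra.algebraMap_eq_smul_one, Prod.ext_iff]

theorem coe_add_unop_adjointInvolution (hB : ∀ i, (B i)ᵀ = ε i • B i) (a : adjointAlgebra B) :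
    (a + (adjointInvolution hB a).unop : adjointAlgebra B).1 =
      (a.1.1 + a.1.2ᵀ, (a.1.1 + a.1.2ᵀ)ᵀ) :=
  Prod.ext rfl <| by
    rw [transpose_add, transpose_transpose, add_comm]
    rfl

theorem mem_span_isNilpotent_adjointAlgebra {Z : Matrix n n R} (hZ : (Z, Zᵀ) ∈ adjointAlgebra B)
    (hspan : Z ∈ Submodule.span R
      {Z : Matrix n n R | (∀ i, Z * B i = B i * Zᵀ) ∧ IsNilpotent Z}) :
    (⟨(Z, Zᵀ), hZ⟩ : adjointAlgebra B) ∈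
      Submodule.span R {p : adjointAlgebra B | IsNilpotent p} := by
  let graph : Matrix n n R →ₗ[R] Matrix n n R × Matrix n n R :=
    LinearMap.id.prod (transposeLinearEquiv n n R R).toLinearMap
  have span_le : Submodule.span R {Z : Matrix n n R | (∀ i, Z * B i = B i * Zᵀ) ∧ IsNilpotent Z} ≤
      ((Submodule.span R {p : adjointAlgebra B | IsNilpotent p}).map
        (adjointAlgebra B).val.toLinearMap).comap graph := by
    refine Submodule.span_le.mpr fun X ⟨hX, k, hk⟩ => ?_
    refine ⟨⟨(X, Xᵀ), hX⟩, Submodule.subset_span ⟨k, Subtype.ext (Prod.ext ?_ ?_)⟩, rfl⟩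
    · simpa using hk
    · simp [← transpose_pow, hk]
  obtain ⟨p, hp, hpZ⟩ := span_le hspan
  rwa [← show p = ⟨(Z, Zᵀ), hZ⟩ from Subtype.ext hpZ]

end AdjointAlgebra

theorem stmt_19_general {F ι n : Type*} [Field F] (h2 : (2 : F) ≠ 0) [Fintype n] [DecidableEq n]
    [Nonempty n] {B : ι → Matrix n n F} {ε : ι → F} (hB : ∀ i, (B i)ᵀ = ε i • B i) :
    Submodule.span F {Z : Matrix n n F | (∀ i, Z * B i = B i * Zᵀ) ∧ IsNilpotent Z} <
      Submodule.span F {Z : Matrix n n F | ∀ i, Z * B i = B i * Zᵀ} := by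
  obtain ⟨a, ha⟩ := exists_add_unop_notMem_span_isNilpotent h2 (adjointInvolution hB)
  have hcoe := coe_add_unop_adjointInvolution hB a
  have hmem : (a.1.1 + a.1.2ᵀ, (a.1.1 + a.1.2ᵀ)ᵀ) ∈ adjointAlgebra B :=
    hcoe ▸ (a + (adjointInvolution hB a).unop).2
  refine lt_of_le_of_ne (Submodule.span_mono fun Z hZ => hZ.1) fun heq => ha ?_
  rw [show a + (adjointInvolution hB a).unop = ⟨_, hmem⟩ from Subtype.ext hcoe]
  exact mem_span_isNilpotent_adjointAlgebra hmem (heq ▸ Submodule.subset_span hmem)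

/-- For a non-degenerate tuple of ε-symmetric matrices B over a field of
characteristic ≠ 2, the space L^ε(B) = {Z : Z B_i = B_i Zᵀ for all i} cannot
be spanned by its nilpotent elements. -/
theorem stmt_19 {F : Type*} [Field F] (h2 : (2 : F) ≠ 0)
    (ε : F) (hε : ε = 1 ∨ ε = -1) (n m : ℕ) (hn : 1 ≤ n)
    (B : Fin m → Matrix (Fin n) (Fin n) F)
    (hB : ∀ i, (B i)ᵀ = ε • B i)
    (hnd : ⨅ i, LinearMap.ker (B i).mulVecLin = ⊥) :
    Submodule.span F
        {Z : Matrix (Fin n) (Fin n) F |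
          (∀ i, Z * B i = B i * Zᵀ) ∧ IsNilpotent Z} <
      Submodule.span F
        {Z : Matrix (Fin n) (Fin n) F | ∀ i, Z * B i = B i * Zᵀ} := by
  have : NeZero n := ⟨Nat.one_le_iff_ne_zero.mp hn⟩
  exact stmt_19_general h2 hB
end
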